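/- arXiv:0711.2677 — 2 statements merged into one kernel-verified Lean document; each statement's English description precedes it below -/
import Mathlib

section
/- Let K be an algebraically closed field equipped with a surjective valuation v: K^* → ℚ, complete with respect to the valuation topology, and such that v(n·1_K) = 0 for every nonzero integer n (residue characteristic zero). Let (ι, Γ, m) be a zero tension curve in ℚ^n of genus one which is well spaced. Then there exist q ∈ K^* with v(q) > 0 and finite multisets Z_1^+, Z_1^-, …, Z_n^+, Z_n^- of elements of K^* with |Z_i^+| = |Z_i^-| and ∏_{z ∈ Z_i^+} z = ∏_{z ∈ Z_i^-} z for each i, such that, setting φ_i(u) = ∏_{z ∈ Z_i^+} Θ_z(u) / ∏_{z ∈ Z_i^-} Θ_z(u), each φ_i satisfies φ_i(qu) = φ_i(u) on its domain (so φ = (φ_1, …, φ_n) defines a map from the Tate elliptic curve K^*/q^ℤ minus finitely many points to (K^*)^n), and the set {(v(φ_1(u)), …, v(φ_n(u))) : u ∈ K^*, u ∉ q^ℤ·(⋃_i (Z_i^+ ∪ Z_i^-))} equals the image ι(Γ ∖ ∂Γ) ⊆ ℚ^n. -/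
/-!
Only the image set of the curve has to be realized, so the parametrization may be chosen freely.
The curve that is lifted is a double of the given one: the multiplicities on the circuit are
doubled (and its lengths halved), and two copies of every tree hang off each circuit vertex. For
this doubled curve there is no obstruction, and the argument does not distinguish well spaced
curves from others.

A connected graph with as many edges as vertices is the graph of a map `nxt` on its vertices that
moves towards the circuit and rotates the circuit (`exists_functional`, `exists_uni`). Write
`c 0, …, c r = c 0` for the circuit and `xx j` for the position of `c j` on the doubled circuit, so
that `q` has valuation `xx r`. A ray `ρ` of multiplicity times direction `σ ρ` lies in a tree with
root some `c k`. Realizing the tree as a tree of discs in the valuation ring, with integers `≥ 2` as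
digits, turns `ρ` into a point `y` of valuation zero, and `ρ` contributes zeros or poles of order
`|σ ρ i|` to the `i`-th coordinate at the two points `t_k y` and `t_k / y`, where `v (t_k) = xx k`.
The product of these two points is `t_k ^ 2`, a power of a fixed element. By the zero tension
condition at the circuit the numbers of zeros and poles agree, and their products differ by an
integral power of `q`, because the circuit closes up (`prod_zz`). The power is compensated by
the auxiliary points in `Zp` and `Zm`, which also adjust the constant factor.

On the annulus `0 ≤ v u < v q` only the factor `1 - u / z` of each theta function matters
(`v_theta`). If `u / t_k` is not a unit for any `k`, the valuation of the map is the piecewise linear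
function `G` of `v u`, which parametrizes the circuit (`G_eq`, `F_off`). If `x = u / t_k` is a unit,
the first copies of the trees at `c k` contribute the tree evaluation `P` at `x`, and the second
copies that at `x⁻¹` (`F_on`). At most one of the two contributions is nontrivial: the residues of
`x` and `x⁻¹` are not both integers `≥ 2`, because the residue characteristic is zero
(`inv_not_near`). So the value is `P` at `x` or at `x⁻¹`. Descending along the discs shows that `P` takes values in the curve
(`P_mem`), and the same computation produces a preimage of each of its points (`exists_pt`).
-/

open scoped Classical

/-- A combinatorial model of a *zero tension curve* `(ι, Γ, m)` in `ℚ^n`.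
The interior vertices (the vertices of `Γ ∖ ∂Γ`) are `Fin V`, placed in `ℚ^n` by `pos`.
Bounded edges (both endpoints interior) are `Fin EB`; the edge `e` joins `bsrc e` to
`bdst e`, has primitive direction `bdir e` (or `0` if it is contracted to a point),
length `blen e` and multiplicity `mB e`.  Unbounded edges (rays, with one endpoint a
degree-one boundary vertex of `Γ`) are `Fin ER`; the ray `e` is attached to the interior
vertex `rsrc e`, points in the primitive direction `rdir e` and has multiplicity `mR e`. -/
structure ZTC (n : ℕ) where
  V : ℕ
  EB : ℕ
  ER : ℕ
  pos : Fin V → Fin n → ℚ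
  bsrc : Fin EB → Fin V
  bdst : Fin EB → Fin V
  bdir : Fin EB → Fin n → ℤ
  blen : Fin EB → ℚ
  mB : Fin EB → ℕ
  rsrc : Fin ER → Fin V
  rdir : Fin ER → Fin n → ℤ
  mR : Fin ER → ℕ

/-- A vector of `ℤ^n` is primitive: nonzero, and its coordinates have no common factor. -/
def IsPrimitiveVec {n : ℕ} (ρ : Fin n → ℤ) : Prop :=
  ρ ≠ 0 ∧ ∀ d : ℤ, (∀ i, d ∣ ρ i) → IsUnit d

namespace ZTC

variable {n : ℕ} (C : ZTC n)

/-- Validity of the data: multiplicities positive, directions primitive (with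
`bdir e = 0` exactly for contracted edges), bounded edges join their endpoints, and the
zero tension condition holds at every interior vertex. -/
def Valid : Prop :=
  (∀ e, 0 < C.mB e) ∧ (∀ e, 0 < C.mR e) ∧
  (∀ e, IsPrimitiveVec (C.rdir e)) ∧
  (∀ e, (0 < C.blen e ∧ IsPrimitiveVec (C.bdir e)) ∨ (C.blen e = 0 ∧ C.bdir e = 0)) ∧
  (∀ e, (fun i => C.pos (C.bdst e) i - C.pos (C.bsrc e) i)
      = fun i => C.blen e * (C.bdir e i : ℚ)) ∧
  (∀ u : Fin C.V,
    (∑ e : Fin C.EB, (C.mB e : ℤ) •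
        ((if C.bsrc e = u then C.bdir e else 0) + (if C.bdst e = u then -C.bdir e else 0)))
      + (∑ e : Fin C.ER, if C.rsrc e = u then (C.mR e : ℤ) • C.rdir e else 0) = 0)

/-- Two interior vertices are adjacent if some bounded edge joins them. -/
def Adj (u w : Fin C.V) : Prop :=
  ∃ e, (C.bsrc e = u ∧ C.bdst e = w) ∨ (C.bsrc e = w ∧ C.bdst e = u)

/-- The graph `Γ` is connected. -/
def Connected : Prop :=
  ∀ u w : Fin C.V, Relation.ReflTransGen C.Adj u w

/-- The image `ι(Γ ∖ ∂Γ) ⊆ ℚ^n`. -/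
def ImageSet : Set (Fin n → ℚ) :=
  {x | (∃ u, x = C.pos u) ∨
    (∃ e, ∃ s : ℚ, 0 ≤ s ∧ s ≤ C.blen e ∧
      x = fun i => C.pos (C.bsrc e) i + s * (C.bdir e i : ℚ)) ∨
    (∃ e, ∃ s : ℚ, 0 ≤ s ∧
      x = fun i => C.pos (C.rsrc e) i + s * (C.rdir e i : ℚ))}

/-- A circuit of length `r ≥ 1` in `Γ`: cyclically indexed distinct vertices `c k` and
distinct edges `ce k`, the edge `ce k` joining `c k` to `c (k+1)`. -/
def IsCircuit (r : ℕ) (c : ZMod r → Fin C.V) (ce : ZMod r → Fin C.EB) : Prop :=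
  r ≠ 0 ∧ Function.Injective c ∧ Function.Injective ce ∧
  ∀ k : ZMod r, (C.bsrc (ce k) = c k ∧ C.bdst (ce k) = c (k + 1)) ∨
    (C.bsrc (ce k) = c (k + 1) ∧ C.bdst (ce k) = c k)

/-- `WalkLen C u w L`: there is a walk in `Γ` from `u` to `w` of total metric length `L`
(each edge `e` traversed contributing its length `blen e`). -/
inductive WalkLen : Fin C.V → Fin C.V → ℚ → Prop
  | refl (u : Fin C.V) : WalkLen u u 0
  | step {u w x : Fin C.V} {L : ℚ} (e : Fin C.EB)
      (he : (C.bsrc e = u ∧ C.bdst e = w) ∨ (C.bsrc e = w ∧ C.bdst e = u))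
      (hw : WalkLen w x L) : WalkLen u x (C.blen e + L)

/-- A point `p ∈ ℚ^n` lies on the affine hyperplane `⟨a, ·⟩ = b`. -/
def OnHyp (a : Fin n → ℚ) (b : ℚ) (p : Fin n → ℚ) : Prop := ∑ i, a i * p i = b

/-- Membership in the connected component `Δ` of `Γ ∩ ι⁻¹(H)` containing the circuit,
for `H` the hyperplane `⟨a, ·⟩ = b`: vertices reachable from the circuit vertex `c 0`
through edges both of whose endpoints lie on `H`. -/
def DeltaMem {r : ℕ} (c : ZMod r → Fin C.V) (a : Fin n → ℚ) (b : ℚ) (u : Fin C.V) : Prop :=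
  Relation.ReflTransGen
    (fun x y => OnHyp a b (C.pos x) ∧ OnHyp a b (C.pos y) ∧ C.Adj x y) (c 0) u

/-- `u` is a boundary vertex of `Δ`: it lies in `Δ` and in the closure of `Γ ∖ Δ`,
i.e. some edge or ray leaves the hyperplane at `u`. -/
def IsBdryVert {r : ℕ} (c : ZMod r → Fin C.V) (a : Fin n → ℚ) (b : ℚ) (u : Fin C.V) : Prop :=
  DeltaMem C c a b u ∧
    ((∃ e w, ((C.bsrc e = u ∧ C.bdst e = w) ∨ (C.bsrc e = w ∧ C.bdst e = u)) ∧
        ¬ OnHyp a b (C.pos w)) ∨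
      (∃ e, C.rsrc e = u ∧ (∑ i, a i * (C.rdir e i : ℚ)) ≠ 0))

/-- `DistToCircuit C c u L`: the distance in the metric graph `Γ` from the vertex `u` to
the circuit `c` is exactly `L`. -/
def DistToCircuit {r : ℕ} (c : ZMod r → Fin C.V) (u : Fin C.V) (L : ℚ) : Prop :=
  (∃ k : ZMod r, C.WalkLen u (c k) L) ∧
    ∀ L' : ℚ, (∃ k : ZMod r, C.WalkLen u (c k) L') → L ≤ L'

/-- `(ι, Γ, m)` is *well spaced* with respect to its circuit `c`: for every affine
hyperplane `H = {⟨a, ·⟩ = b}` containing the circuit, the minimum of the distances from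
the boundary vertices of the component `Δ` of `Γ ∩ ι⁻¹(H)` containing the circuit to the
circuit is attained at least twice. -/
def WellSpaced {r : ℕ} (c : ZMod r → Fin C.V) : Prop :=
  ∀ (a : Fin n → ℚ) (b : ℚ), a ≠ 0 → (∀ k : ZMod r, OnHyp a b (C.pos (c k))) →
    ∀ (x : Fin C.V) (L : ℚ), IsBdryVert C c a b x → DistToCircuit C c x L →
      (∀ (y : Fin C.V) (L' : ℚ), IsBdryVert C c a b y → DistToCircuit C c y L' → L ≤ L') →
      ∃ x' : Fin C.V, x' ≠ x ∧ IsBdryVert C c a b x' ∧ DistToCircuit C c x' L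

end ZTC

/-- Convergence of a sequence in the valuation topology: `x_m → L` iff
`v (x_m - L) → ∞`. -/
def VTendsto {K : Type*} [Field K] (v : K → WithTop ℚ) (x : ℕ → K) (L : K) : Prop :=
  ∀ M : ℚ, ∃ N : ℕ, ∀ m ≥ N, (M : WithTop ℚ) ≤ v (x m - L)

/-- The elliptic function `φ_{Z⁺,Z⁻}(u) = ∏_{z ∈ Z⁺} Θ_z(u) / ∏_{z ∈ Z⁻} Θ_z(u)` built
from a theta function `Θ`. -/
noncomputable def phiVal {K : Type*} [Field K] (Θ : K → K → K) (Zp Zm : Multiset K)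
    (u : K) : K :=
  ((Zp.map fun z => Θ z u).prod) / ((Zm.map fun z => Θ z u).prod)

/-- The domain of the elliptic map: `u ∈ K^*` away from the `q^ℤ`-orbits of all the
points of the multisets `Z_i^±`. -/
def TateDom {K : Type*} [Field K] {n : ℕ} (q : K) (Zp Zm : Fin n → Multiset K)
    (u : K) : Prop :=
  u ≠ 0 ∧ ∀ (j : ℤ) (i : Fin n), (∀ z ∈ Zp i, u ≠ q ^ j * z) ∧ (∀ z ∈ Zm i, u ≠ q ^ j * z)


/-! ### Valued fields -/

namespace TropLift

/-- The hypotheses on the valued field `(K, v)`: `v` is a valuation with value group `ℚ`,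
residue characteristic zero, and `K` is complete. -/
structure ValField {K : Type*} [Field K] (v : K → WithTop ℚ) : Prop where
  top_iff : ∀ x : K, v x = ⊤ ↔ x = 0
  mul : ∀ x y : K, v (x * y) = v x + v y
  add : ∀ x y : K, min (v x) (v y) ≤ v (x + y)
  int : ∀ m : ℤ, m ≠ 0 → v ((m : K)) = 0
  surj : ∀ a : ℚ, ∃ x : K, v x = (a : WithTop ℚ)
  complete : ∀ x : ℕ → K,
      (∀ M : ℚ, ∃ N : ℕ, ∀ m₁ ≥ N, ∀ m₂ ≥ N, (M : WithTop ℚ) ≤ v (x m₁ - x m₂)) →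
      ∃ L : K, VTendsto v x L

/-- The valuation as a rational number, with junk value `0` at `x = 0`. -/
def val {K : Type*} (v : K → WithTop ℚ) (x : K) : ℚ := (v x).untopD 0

section Valuation

variable {K : Type*} [Field K] {v : K → WithTop ℚ} (H : ValField v)
include H

lemma ValField.v_zero : v 0 = ⊤ := (H.top_iff 0).2 rfl

lemma ValField.v_one : v 1 = 0 := by simpa using H.int 1 one_ne_zero

lemma ValField.coe_val {x : K} (hx : x ≠ 0) : v x = (val v x : WithTop ℚ) := by
  have h : v x ≠ ⊤ := fun h => hx ((H.top_iff x).1 h)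
  obtain ⟨a, ha⟩ := WithTop.ne_top_iff_exists.1 h
  rw [val, ← ha]; rfl

omit [Field K] H in
lemma val_of_eq {x : K} {a : ℚ} (h : v x = (a : WithTop ℚ)) : val v x = a := by
  rw [val, h]; rfl

lemma ValField.ne_zero_of_eq {x : K} {a : ℚ} (h : v x = (a : WithTop ℚ)) : x ≠ 0 := by
  rintro rfl
  rw [H.v_zero] at h
  exact WithTop.top_ne_coe h

lemma ValField.ne_zero_of_lt {x : K} {a : WithTop ℚ} (h : v x < a) : x ≠ 0 := by
  rintro rfl
  rw [H.v_zero] at h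
  exact not_top_lt h

lemma ValField.val_mul {x y : K} (hx : x ≠ 0) (hy : y ≠ 0) :
    val v (x * y) = val v x + val v y := by
  apply val_of_eq
  rw [H.mul, H.coe_val hx, H.coe_val hy]; rfl

lemma ValField.val_one : val v 1 = 0 := val_of_eq H.v_one

lemma ValField.val_inv {x : K} (hx : x ≠ 0) : val v x⁻¹ = - val v x := by
  have := H.val_mul hx (inv_ne_zero hx)
  rw [mul_inv_cancel₀ hx, H.val_one] at this
  linarith

lemma ValField.val_div {x y : K} (hx : x ≠ 0) (hy : y ≠ 0) :
    val v (x / y) = val v x - val v y := by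
  rw [div_eq_mul_inv, H.val_mul hx (inv_ne_zero hy), H.val_inv hy]; ring

lemma ValField.val_pow {x : K} (hx : x ≠ 0) (k : ℕ) : val v (x ^ k) = k * val v x := by
  induction k with
  | zero => simp [H.val_one]
  | succ k ih => rw [pow_succ, H.val_mul (pow_ne_zero _ hx) hx, ih]; push_cast; ring

lemma ValField.val_zpow {x : K} (hx : x ≠ 0) (k : ℤ) : val v (x ^ k) = k * val v x := by
  rcases k with k | k
  · simpa using H.val_pow hx k
  · rw [zpow_negSucc, H.val_inv (pow_ne_zero _ hx), H.val_pow hx]; push_cast; ring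

lemma ValField.v_neg (x : K) : v (-x) = v x := by
  have h : v (-1 : K) = 0 := by simpa using H.int (-1) (by norm_num)
  rw [← neg_one_mul, H.mul, h, zero_add]

lemma ValField.v_sub_comm (x y : K) : v (x - y) = v (y - x) := by
  rw [← H.v_neg, neg_sub]

lemma ValField.le_add {x y : K} {a : WithTop ℚ} (hx : a ≤ v x) (hy : a ≤ v y) :
    a ≤ v (x + y) := (le_min hx hy).trans (H.add x y)

lemma ValField.le_sub {x y : K} {a : WithTop ℚ} (hx : a ≤ v x) (hy : a ≤ v y) :
    a ≤ v (x - y) := by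
  rw [sub_eq_add_neg]; exact H.le_add hx (by rwa [H.v_neg])

lemma ValField.lt_add {x y : K} {a : WithTop ℚ} (hx : a < v x) (hy : a < v y) :
    a < v (x + y) := (lt_min hx hy).trans_le (H.add x y)

lemma ValField.add_eq {x y : K} (h : v x < v y) : v (x + y) = v x := by
  apply le_antisymm
  · by_contra! h2
    have := H.lt_add h2 (y := -y) (by rwa [H.v_neg])
    simp at this
  · exact H.le_add le_rfl h.le

/-- If `x` is closer to `z` than `y` is, then `x` and `z` are at the same distance from `y`. -/
lemma ValField.sub_eq {x y z : K} (h : v (z - y) < v (x - z)) : v (x - y) = v (z - y) := by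
  have := H.add_eq h
  rwa [show z - y + (x - z) = x - y by ring] at this

lemma ValField.one_sub_eq {x : K} (h : 0 < v x) : v (1 - x) = 0 := by
  have := H.add_eq (x := 1) (y := -x) (by rwa [H.v_neg, H.v_one])
  rwa [← sub_eq_add_neg, H.v_one] at this

lemma ValField.one_sub_eq_of_lt {x : K} (h : v x < 0) : v (1 - x) = v x := by
  have := H.add_eq (x := -x) (y := 1) (by rwa [H.v_neg, H.v_one])
  rwa [show -x + 1 = 1 - x by ring, H.v_neg] at this

lemma ValField.val_pos {x : K} (hx : x ≠ 0) : 0 < v x ↔ 0 < val v x := by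
  rw [H.coe_val hx]; exact WithTop.coe_pos

/-! ### Limits in the valuation topology -/

lemma ValField.tendsto_unique {x : ℕ → K} {a b : K} (ha : VTendsto v x a)
    (hb : VTendsto v x b) : a = b := by
  by_contra hab
  have h0 : a - b ≠ 0 := sub_ne_zero.2 hab
  obtain ⟨N, hN⟩ := ha (val v (a - b) + 1)
  obtain ⟨N', hN'⟩ := hb (val v (a - b) + 1)
  have h := H.le_sub (hN' (max N N') (le_max_right _ _)) (hN (max N N') (le_max_left _ _))
  rw [show x (max N N') - b - (x (max N N') - a) = a - b by ring, H.coe_val h0,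
    WithTop.coe_le_coe] at h
  linarith

lemma ValField.tendsto_add {x y : ℕ → K} {a b : K} (ha : VTendsto v x a)
    (hb : VTendsto v y b) : VTendsto v (fun m => x m + y m) (a + b) := by
  intro M
  obtain ⟨N, hN⟩ := ha M
  obtain ⟨N', hN'⟩ := hb M
  refine ⟨max N N', fun m hm => ?_⟩
  have h := H.le_add (hN m ((le_max_left _ _).trans hm)) (hN' m ((le_max_right _ _).trans hm))
  rwa [show x m - a + (y m - b) = x m + y m - (a + b) by ring] at h

lemma ValField.tendsto_const_mul {x : ℕ → K} {a : K} (k : K) (ha : VTendsto v x a) :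
    VTendsto v (fun m => k * x m) (k * a) := by
  intro M
  by_cases hk : k = 0
  · subst hk
    exact ⟨0, fun m _ => by simp [H.v_zero]⟩
  obtain ⟨N, hN⟩ := ha (M - val v k)
  refine ⟨N, fun m hm => ?_⟩
  show _ ≤ v (k * x m - k * a)
  rw [← mul_sub, H.mul, H.coe_val hk]
  calc (M : WithTop ℚ) = (val v k : WithTop ℚ) + ((M - val v k : ℚ) : WithTop ℚ) := by
        rw [← WithTop.coe_add]; congr 1; ring
    _ ≤ _ := by gcongr; exact hN m hm

/-- A convergent sequence times a power of an element of positive valuation tends to zero. -/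
lemma ValField.tendsto_mul_pow {x : ℕ → K} {a q : K} (hq : q ≠ 0) (hq0 : 0 < v q)
    (ha : VTendsto v x a) : VTendsto v (fun m => x m * q ^ m) 0 := by
  intro M
  obtain ⟨B, hB⟩ : ∃ B : ℚ, (B : WithTop ℚ) ≤ v a := by
    by_cases h : a = 0
    · exact ⟨0, by simp [h, H.v_zero]⟩
    · exact ⟨_, (H.coe_val h).ge⟩
  obtain ⟨N, hN⟩ := ha B
  have hL := (H.val_pos hq).1 hq0
  obtain ⟨N', hN'⟩ := exists_nat_gt ((M - B) / val v q)
  refine ⟨max N N', fun m hm => ?_⟩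
  have h1 : (B : WithTop ℚ) ≤ v (x m) := by
    have := H.le_add (hN m ((le_max_left _ _).trans hm)) hB
    simpa using this
  have h2 : M ≤ B + m * val v q := by
    rw [div_lt_iff₀ hL] at hN'
    have : (N' : ℚ) ≤ m := by exact_mod_cast (le_max_right _ _).trans hm
    nlinarith
  rw [sub_zero, H.mul, H.coe_val (pow_ne_zero _ hq), H.val_pow hq]
  calc (M : WithTop ℚ) ≤ ((B + m * val v q : ℚ) : WithTop ℚ) := WithTop.coe_le_coe.2 h2
    _ = (B : WithTop ℚ) + ((m * val v q : ℚ) : WithTop ℚ) := WithTop.coe_add _ _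
    _ ≤ _ := by gcongr

lemma ValField.telescope_le {x : ℕ → K} {N : ℕ} {M : WithTop ℚ}
    (h : ∀ m ≥ N, M ≤ v (x (m + 1) - x m)) : ∀ m ≥ N, M ≤ v (x m - x N) := by
  intro m hm
  induction m, hm using Nat.le_induction with
  | base => simp [H.v_zero]
  | succ m hm ih =>
    have := H.le_add (h m hm) ih
    rwa [show x (m + 1) - x m + (x m - x N) = x (m + 1) - x N by ring] at this

end Valuation

/-! ### The theta function -/

section Theta

variable {K : Type*} [Field K] {v : K → WithTop ℚ} (H : ValField v)

/-- Partial products of the theta function `∏_{j ≥ 0} (1 - q^j w) ∏_{j ≥ 1} (1 - q^j / w)`. -/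
def thetaPart (q w : K) (m : ℕ) : K :=
  (∏ j ∈ Finset.range m, (1 - q ^ j * w)) * ∏ j ∈ Finset.range m, (1 - q ^ (j + 1) / w)

lemma thetaPart_succ (q w : K) (m : ℕ) :
    thetaPart q w (m + 1) = thetaPart q w m * ((1 - q ^ m * w) * (1 - q ^ (m + 1) / w)) := by
  rw [thetaPart, thetaPart, Finset.prod_range_succ, Finset.prod_range_succ]; ring

lemma thetaPart_shift {q w : K} (hq : q ≠ 0) (hw : w ≠ 0) (m : ℕ) :
    thetaPart q (q * w) m * (1 - q ^ m / w) = -(1 / w) * (thetaPart q w m * (1 - q ^ m * w)) := by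
  induction m with
  | zero => simp [thetaPart]; field_simp; ring
  | succ m ih =>
    rw [thetaPart_succ, thetaPart_succ]
    have e1 : q ^ (m + 1) / (q * w) = q ^ m / w := by rw [pow_succ]; field_simp
    have e2 : q ^ m * (q * w) = q ^ (m + 1) * w := by ring
    rw [e1, e2]
    linear_combination (1 - q ^ (m + 1) * w) * (1 - q ^ (m + 1) / w) * ih

/-- `w` does not lie in the subgroup `q^ℤ`. -/
def NotPow (q w : K) : Prop := ∀ j : ℤ, w ≠ q ^ j

lemma thetaPart_ne_zero {q w : K} (hq : q ≠ 0) (hw : w ≠ 0) (hnw : NotPow q w) (m : ℕ) :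
    thetaPart q w m ≠ 0 := by
  refine mul_ne_zero (Finset.prod_ne_zero_iff.2 fun j _ h => ?_)
    (Finset.prod_ne_zero_iff.2 fun j _ h => ?_)
  · apply hnw (-(j : ℤ))
    rw [zpow_neg, zpow_natCast]
    field_simp
    linear_combination -h
  · apply hnw ((j + 1 : ℕ) : ℤ)
    rw [zpow_natCast]
    field_simp at h
    linear_combination h

include H

/-- Once `m v(q) > |v(w)|`, the valuations of the partial products are constant and the
products converge to a limit of the same valuation. -/
lemma theta_limit {q w : K} (hq : q ≠ 0) (hq0 : 0 < v q) (hw : w ≠ 0) (hnw : NotPow q w)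
    (M₀ : ℕ) (hM₀ : |val v w| < M₀ * val v q) :
    ∃ l : K, VTendsto v (thetaPart q w) l ∧ v l = v (thetaPart q w M₀) := by
  have hL := (H.val_pos hq).1 hq0
  have hbd : ∀ m ≥ M₀, |val v w| < m * val v q := fun m hm => by
    have : (M₀ : ℚ) ≤ m := by exact_mod_cast hm
    nlinarith
  have e1 : ∀ m : ℕ, v (q ^ m * w) = ((m * val v q + val v w : ℚ) : WithTop ℚ) := fun m => by
    rw [H.coe_val (mul_ne_zero (pow_ne_zero _ hq) hw), H.val_mul (pow_ne_zero _ hq) hw,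
      H.val_pow hq]
  have e2 : ∀ m : ℕ, v (q ^ m / w) = ((m * val v q - val v w : ℚ) : WithTop ℚ) := fun m => by
    rw [H.coe_val (div_ne_zero (pow_ne_zero _ hq) hw), H.val_div (pow_ne_zero _ hq) hw,
      H.val_pow hq]
  have hconst : ∀ m ≥ M₀, v (thetaPart q w m) = v (thetaPart q w M₀) := by
    intro m hm
    induction m, hm using Nat.le_induction with
    | base => rfl
    | succ m hm ih =>
      have h := abs_lt.1 (hbd m hm)
      rw [thetaPart_succ, H.mul, H.mul, H.one_sub_eq, H.one_sub_eq, ih]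
      · simp
      · rw [e2]; apply WithTop.coe_pos.2; push_cast; nlinarith
      · rw [e1]; apply WithTop.coe_pos.2; linarith
  set c := val v (thetaPart q w M₀) with hc
  have hcv : v (thetaPart q w M₀) = (c : WithTop ℚ) :=
    H.coe_val (thetaPart_ne_zero hq hw hnw M₀)
  have hinc : ∀ m ≥ M₀, ((c + (m * val v q - |val v w|) : ℚ) : WithTop ℚ)
      ≤ v (thetaPart q w (m + 1) - thetaPart q w m) := by
    intro m hm
    have e : thetaPart q w (m + 1) - thetaPart q w m
        = thetaPart q w m * (q ^ m * q ^ (m + 1) - q ^ m * w - q ^ (m + 1) / w) := by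
      rw [thetaPart_succ]; field_simp; ring
    rw [e, H.mul, hconst m hm, hcv, WithTop.coe_add]
    gcongr
    have a1 := le_abs_self (val v w)
    have a2 := neg_abs_le (val v w)
    have a3 := abs_nonneg (val v w)
    have a4 : (0 : ℚ) ≤ m * val v q := by positivity
    refine H.le_sub (H.le_sub ?_ ?_) ?_
    · rw [← pow_add, H.coe_val (pow_ne_zero _ hq), H.val_pow hq]
      apply WithTop.coe_le_coe.2; push_cast; nlinarith
    · rw [e1]; apply WithTop.coe_le_coe.2; linarith
    · rw [e2]; apply WithTop.coe_le_coe.2; push_cast; nlinarith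
  have hcau : ∀ M : ℚ, ∃ N : ℕ, ∀ m₁ ≥ N, ∀ m₂ ≥ N,
      (M : WithTop ℚ) ≤ v (thetaPart q w m₁ - thetaPart q w m₂) := by
    intro M
    obtain ⟨N', hN'⟩ := exists_nat_gt ((M - c + |val v w|) / val v q)
    rw [div_lt_iff₀ hL] at hN'
    have key : ∀ m ≥ max M₀ N', (M : WithTop ℚ)
        ≤ v (thetaPart q w (m + 1) - thetaPart q w m) := by
      intro m hm
      refine le_trans (WithTop.coe_le_coe.2 ?_) (hinc m ((le_max_left _ _).trans hm))
      have : (N' : ℚ) ≤ m := by exact_mod_cast (le_max_right _ _).trans hm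
      nlinarith
    refine ⟨max M₀ N', fun m₁ h₁ m₂ h₂ => ?_⟩
    have := H.le_sub (H.telescope_le key m₁ h₁) (H.telescope_le key m₂ h₂)
    rwa [sub_sub_sub_cancel_right] at this
  obtain ⟨l, hl⟩ := H.complete _ hcau
  refine ⟨l, hl, ?_⟩
  obtain ⟨N, hN⟩ := hl (c + 1)
  have h1 := hN (max M₀ N) (le_max_right _ _)
  have h2 := (hconst (max M₀ N) (le_max_left _ _)).trans hcv
  have h3 : v (thetaPart q w (max M₀ N)) < v (l - thetaPart q w (max M₀ N)) := by
    rw [h2, H.v_sub_comm]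
    exact lt_of_lt_of_le (WithTop.coe_lt_coe.2 (by linarith)) h1
  have := H.add_eq h3
  rw [add_sub_cancel, h2] at this
  rw [this, hcv]

omit H in
/-- The theta function `θ(w)`, as a limit in the valuation topology; `0` where there is none. -/
noncomputable def theta (v : K → WithTop ℚ) (q w : K) : K :=
  if h : ∃ l, VTendsto v (thetaPart q w) l then h.choose else 0

lemma theta_spec {q w : K} (hq : q ≠ 0) (hq0 : 0 < v q) (hw : w ≠ 0) (hnw : NotPow q w) :
    VTendsto v (thetaPart q w) (theta v q w) := by
  obtain ⟨M₀, h⟩ := exists_nat_gt (|val v w| / val v q)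
  rw [div_lt_iff₀ ((H.val_pos hq).1 hq0)] at h
  obtain ⟨l, hl, -⟩ := theta_limit H hq hq0 hw hnw M₀ h
  have hex : ∃ l, VTendsto v (thetaPart q w) l := ⟨l, hl⟩
  rw [theta, dif_pos hex]
  exact hex.choose_spec

lemma theta_ne_zero {q w : K} (hq : q ≠ 0) (hq0 : 0 < v q) (hw : w ≠ 0) (hnw : NotPow q w) :
    theta v q w ≠ 0 := by
  obtain ⟨M₀, h⟩ := exists_nat_gt (|val v w| / val v q)
  rw [div_lt_iff₀ ((H.val_pos hq).1 hq0)] at h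
  obtain ⟨l, hl, hv⟩ := theta_limit H hq hq0 hw hnw M₀ h
  rw [H.tendsto_unique (theta_spec H hq hq0 hw hnw) hl]
  rw [H.coe_val (thetaPart_ne_zero hq hw hnw M₀)] at hv
  exact H.ne_zero_of_eq hv

/-- In the annulus `|v(w)| < v(q)` only the factor `1 - w` contributes to `v(θ(w))`. -/
lemma v_theta {q w : K} (hq : q ≠ 0) (hq0 : 0 < v q) (hw : w ≠ 0) (hnw : NotPow q w)
    (hlt : |val v w| < val v q) : v (theta v q w) = v (1 - w) := by
  obtain ⟨l, hl, hv⟩ := theta_limit H hq hq0 hw hnw 1 (by simpa using hlt)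
  rw [H.tendsto_unique (theta_spec H hq hq0 hw hnw) hl, hv]
  have : v (1 - q / w) = 0 := by
    apply H.one_sub_eq
    rw [H.val_pos (div_ne_zero hq hw), H.val_div hq hw]
    linarith [(abs_lt.1 hlt).2]
  simp [thetaPart, H.mul, this]

omit H in
lemma NotPow.mul_left {q w : K} (hq : q ≠ 0) (h : NotPow q w) : NotPow q (q * w) := by
  intro j hj
  apply h (j - 1)
  rw [zpow_sub_one₀ hq, ← hj]; field_simp

omit H in
lemma NotPow.mul_zpow {q w : K} (hq : q ≠ 0) (h : NotPow q w) (m : ℤ) :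
    NotPow q (w * q ^ m) := by
  intro j hj
  apply h (j - m)
  rw [zpow_sub₀ hq, ← hj, mul_div_assoc, div_self (zpow_ne_zero _ hq), mul_one]

/-- The functional equation of the theta function. -/
lemma theta_mul_left {q w : K} (hq : q ≠ 0) (hq0 : 0 < v q) (hw : w ≠ 0) (hnw : NotPow q w) :
    theta v q (q * w) = -(1 / w) * theta v q w := by
  have h1 := theta_spec H hq hq0 hw hnw
  have h2 := theta_spec H hq hq0 (mul_ne_zero hq hw) (hnw.mul_left hq)
  refine H.tendsto_unique h2 ?_
  have h3 := H.tendsto_add (H.tendsto_const_mul (-(1 / w)) h1)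
    (H.tendsto_add (H.tendsto_const_mul (1 / w) (H.tendsto_mul_pow hq hq0 h2))
      (H.tendsto_mul_pow hq hq0 h1))
  simp only [mul_zero, add_zero] at h3
  convert h3 using 2 with m
  have := thetaPart_shift hq hw m
  field_simp at this ⊢
  linear_combination this

/-- Shifting the argument of `θ` by a power of `q` multiplies it by a monomial. -/
lemma val_theta_zpow {q : K} (hq : q ≠ 0) (hq0 : 0 < v q) (m : ℤ) :
    ∃ κ : ℚ, ∀ w : K, w ≠ 0 → NotPow q w →
      val v (theta v q (w * q ^ (-m))) = val v (theta v q w) + m * val v w + κ := by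
  have hone : ∀ w : K, w ≠ 0 → NotPow q w →
      val v (theta v q (q * w)) = val v (theta v q w) - val v w := by
    intro w hw hnw
    rw [theta_mul_left H hq hq0 hw hnw, H.val_mul (by simpa using hw)
      (theta_ne_zero H hq hq0 hw hnw), val, H.v_neg, ← val, one_div, H.val_inv hw]
    ring
  induction m with
  | zero => exact ⟨0, fun w _ _ => by simp⟩
  | succ i ih =>
    obtain ⟨κ, hκ⟩ := ih
    refine ⟨κ - (i + 1) * val v q, fun w hw hnw => ?_⟩
    have h := hone (w * q ^ (-((i : ℤ) + 1))) (mul_ne_zero hw (zpow_ne_zero _ hq))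
      (hnw.mul_zpow hq _)
    have e : q * (w * q ^ (-((i : ℤ) + 1))) = w * q ^ (-(i : ℤ)) := by
      rw [neg_add, zpow_add₀ hq, zpow_neg_one]; field_simp
    rw [e, hκ w hw hnw, H.val_mul hw (zpow_ne_zero _ hq), H.val_zpow hq] at h
    push_cast at h ⊢
    linarith
  | pred i ih =>
    obtain ⟨κ, hκ⟩ := ih
    refine ⟨κ - i * val v q, fun w hw hnw => ?_⟩
    have h := hone (w * q ^ (-(-(i : ℤ)))) (mul_ne_zero hw (zpow_ne_zero _ hq))
      (hnw.mul_zpow hq _)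
    have e : q * (w * q ^ (-(-(i : ℤ)))) = w * q ^ (-(-(i : ℤ) - 1)) := by
      rw [show -(-(i : ℤ) - 1) = -(-(i : ℤ)) + 1 by ring, zpow_add_one₀ hq]; ring
    rw [e, hκ w hw hnw, H.val_mul hw (zpow_ne_zero _ hq), H.val_zpow hq] at h
    push_cast at h ⊢
    linarith

end Theta

end TropLift

/-! ### Rooted trees in an ultrametric field -/

namespace TropLift

/-- A rooted metric forest on a node set `N`, given by its parent map. Roots are the nodes of
rank `0`; `lam x` is the length of the edge from `x` to `par x`, and the labels `idx x` serve
as residues that tell siblings apart. -/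
structure Forest (N : Type) where
  par : N → N
  rk : N → ℕ
  lam : N → ℚ
  idx : N → ℕ
  par_root : ∀ x, rk x = 0 → par x = x
  rk_par : ∀ x, rk x ≠ 0 → rk (par x) + 1 = rk x
  lam_pos : ∀ x, 0 < lam x
  idx_inj : Function.Injective idx
  idx_two : ∀ x, 2 ≤ idx x

namespace Forest

variable {N : Type} (T : Forest N)

/-- Distance of a node to its root. -/
def height (x : N) : ℚ := ∑ j ∈ Finset.range (T.rk x), T.lam (T.par^[j] x)

/-- The point of `K` representing a node: its expansion has the digits `idx` along the path
from the root, with `π h` in the place of valuation `h`. -/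
def center {K : Type*} [Field K] (π : ℚ → K) (x : N) : K :=
  ∑ j ∈ Finset.range (T.rk x), (T.idx (T.par^[j] x) : K) * π (T.height (T.par^[j + 1] x))

/-- `p` is an ancestor of `x` (or equal to `x`). -/
def Anc (p x : N) : Prop := ∃ j : ℕ, T.par^[j] x = p

lemma height_root {x : N} (hx : T.rk x = 0) : T.height x = 0 := by simp [height, hx]

lemma center_root {K : Type*} [Field K] (π : ℚ → K) {x : N} (hx : T.rk x = 0) :
    T.center π x = 0 := by simp [center, hx]

lemma height_succ {x : N} (hx : T.rk x ≠ 0) : T.height x = T.height (T.par x) + T.lam x := by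
  rw [height, ← T.rk_par x hx, Finset.sum_range_succ']
  rfl

lemma center_succ {K : Type*} [Field K] (π : ℚ → K) {x : N} (hx : T.rk x ≠ 0) :
    T.center π x = T.center π (T.par x) + T.idx x * π (T.height (T.par x)) := by
  rw [center, ← T.rk_par x hx, Finset.sum_range_succ']
  rfl

lemma height_nonneg (x : N) : 0 ≤ T.height x :=
  Finset.sum_nonneg fun _ _ => (T.lam_pos _).le

lemma anc_refl (x : N) : T.Anc x x := ⟨0, rfl⟩

lemma anc_of_par {p x : N} (h : T.Anc p (T.par x)) : T.Anc p x := by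
  obtain ⟨j, hj⟩ := h
  exact ⟨j + 1, hj⟩

lemma anc_par {p x : N} (h : T.Anc p x) : T.Anc (T.par p) x := by
  obtain ⟨j, hj⟩ := h
  exact ⟨j + 1, by rw [Function.iterate_succ_apply', hj]⟩

lemma anc_cases {p x : N} (h : T.Anc p x) : x = p ∨ T.Anc p (T.par x) := by
  obtain ⟨j, hj⟩ := h
  rcases j with _ | j
  · exact Or.inl hj
  · exact Or.inr ⟨j, hj⟩

lemma anc_root {p x : N} (hx : T.rk x = 0) (h : T.Anc p x) : p = x := by
  obtain ⟨j, hj⟩ := h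
  rw [← hj, Function.iterate_fixed (T.par_root x hx)]

lemma exists_child {p x : N} (h : T.Anc p x) (hne : x ≠ p) :
    ∃ c, T.rk c ≠ 0 ∧ T.par c = p ∧ T.Anc c x := by
  obtain ⟨j, hj⟩ := h
  induction j generalizing x with
  | zero => exact absurd hj hne
  | succ j ih =>
    rw [Function.iterate_succ_apply] at hj
    by_cases hx : T.par x = p
    · refine ⟨x, fun h0 => hne ?_, hx, T.anc_refl x⟩
      rw [← hx, T.par_root x h0]
    · obtain ⟨c, h1, h2, h3⟩ := ih hx hj
      exact ⟨c, h1, h2, T.anc_of_par h3⟩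

lemma height_le_of_anc {p x : N} (h : T.Anc p x) : T.height p ≤ T.height x := by
  obtain ⟨j, rfl⟩ := h
  induction j with
  | zero => exact le_rfl
  | succ j ih =>
    rw [Function.iterate_succ_apply']
    by_cases hx : T.rk (T.par^[j] x) = 0
    · rwa [T.par_root _ hx]
    · have := T.height_succ hx
      have := T.lam_pos (T.par^[j] x)
      linarith

section Field

variable {K : Type*} [Field K] {v : K → WithTop ℚ} (H : ValField v)
  {π : ℚ → K} (hπ : ∀ h : ℚ, v (π h) = (h : WithTop ℚ))
include H hπ

lemma v_center_sub_par {x : N} (hx : T.rk x ≠ 0) :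
    v (T.center π x - T.center π (T.par x)) = (T.height (T.par x) : WithTop ℚ) := by
  have h : v ((T.idx x : K)) = 0 := by
    have := T.idx_two x
    have h2 := H.int (T.idx x : ℤ) (by omega)
    rwa [Int.cast_natCast] at h2
  rw [T.center_succ π hx, add_sub_cancel_left, H.mul, h, hπ, zero_add]

lemma le_v_center_sub {p x : N} (h : T.Anc p x) :
    (T.height p : WithTop ℚ) ≤ v (T.center π x - T.center π p) := by
  obtain ⟨j, hj⟩ := h
  induction j generalizing x with
  | zero =>
    obtain rfl : x = p := hj
    simp [H.v_zero]
  | succ j ih =>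
    rw [Function.iterate_succ_apply] at hj
    have h1 := ih hj
    by_cases hx : T.rk x = 0
    · rwa [T.par_root _ hx] at h1
    · have h2 := T.v_center_sub_par H hπ hx
      have h3 := T.height_le_of_anc ⟨j, hj⟩
      have := H.le_add ((WithTop.coe_le_coe.2 h3).trans h2.ge) h1
      rwa [sub_add_sub_cancel] at this

lemma lt_v_center_sub {c x : N} (hc : T.rk c ≠ 0) (h : T.Anc c x) :
    (T.height (T.par c) : WithTop ℚ) < v (T.center π x - T.center π c) := by
  refine lt_of_lt_of_le (WithTop.coe_lt_coe.2 ?_) (T.le_v_center_sub H hπ h)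
  rw [T.height_succ hc]
  linarith [T.lam_pos c]

lemma v_siblings {c c' : N} (hc : T.rk c ≠ 0) (hc' : T.rk c' ≠ 0) (hp : T.par c = T.par c')
    (hne : c ≠ c') :
    v (T.center π c - T.center π c') = (T.height (T.par c) : WithTop ℚ) := by
  rw [T.center_succ π hc, T.center_succ π hc', ← hp, add_sub_add_left_eq_sub, ← sub_mul, H.mul,
    hπ]
  have h := H.int ((T.idx c : ℤ) - T.idx c') (by
    intro h
    exact hne (T.idx_inj (by omega)))
  push_cast at h
  rw [h, zero_add]

/-- A point in the residue class of the child `c` is at distance exactly `height (par c)` from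
the descendants of any other child. -/
lemma v_sub_of_ne {c c' x : N} {z : K} (hc : T.rk c ≠ 0) (hc' : T.rk c' ≠ 0)
    (hp : T.par c = T.par c') (hne : c ≠ c') (hx : T.Anc c' x)
    (hz : (T.height (T.par c) : WithTop ℚ) < v (z - T.center π c)) :
    v (z - T.center π x) = (T.height (T.par c) : WithTop ℚ) := by
  have h1 := T.v_siblings H hπ hc hc' hp hne
  have h2 : v (z - T.center π c') = (T.height (T.par c) : WithTop ℚ) := by
    rw [H.sub_eq (z := T.center π c), h1]
    rwa [h1]
  have h3 := T.lt_v_center_sub H hπ hc' hx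
  rw [← hp] at h3
  rw [H.v_sub_comm, H.sub_eq (z := T.center π c'), H.v_sub_comm, h2]
  rwa [H.v_sub_comm, h2]

/-- A point in the disc of the node `par c` but not in the residue class of the child `c` is
at distance exactly `height (par c)` from the descendants of `c`. -/
lemma v_sub_of_not_lt {c x : N} {z : K} (hc : T.rk c ≠ 0) (hx : T.Anc c x)
    (hz : (T.height (T.par c) : WithTop ℚ) ≤ v (z - T.center π (T.par c)))
    (hzc : ¬ (T.height (T.par c) : WithTop ℚ) < v (z - T.center π c)) :
    v (z - T.center π x) = (T.height (T.par c) : WithTop ℚ) := by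
  have h2 : v (z - T.center π c) = (T.height (T.par c) : WithTop ℚ) := by
    apply le_antisymm (not_lt.1 hzc)
    have := H.le_sub hz (T.v_center_sub_par H hπ hc).ge
    rwa [sub_sub_sub_cancel_right] at this
  have h3 := T.lt_v_center_sub H hπ hc hx
  rw [H.v_sub_comm, H.sub_eq (z := T.center π c), H.v_sub_comm, h2]
  rwa [H.v_sub_comm, h2]

end Field

end Forest

end TropLift

/-! ### Evaluation on the trees of a genus one skeleton -/

namespace TropLift

/-- A genus one zero tension curve in normal form: vertices `W` and rays `R` form a forest of
trees attached to a circuit `c 0, …, c r = c 0`. Every edge carries a positive length and an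
integer slope (multiplicity times primitive direction), and contracted edges have slope `0` and
positive length. The zero tension condition enters in two integrated forms: `balance`, for a
subtree, and `circ_balance`, for functions constant on the trees hanging off the circuit. -/
structure Skel (n : ℕ) (W R : Type) [Fintype R] where
  T : Forest (W ⊕ R)
  pos : W → Fin n → ℚ
  parW : W → W
  b : R → W
  par_inl : ∀ w, T.par (Sum.inl w) = Sum.inl (parW w)
  par_inr : ∀ ρ, T.par (Sum.inr ρ) = Sum.inl (b ρ)
  rk_inr : ∀ ρ, T.rk (Sum.inr ρ) ≠ 0
  s : W → Fin n → ℤ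
  σ : R → Fin n → ℤ
  σ_ne : ∀ ρ, σ ρ ≠ 0
  pos_edge : ∀ w, T.rk (Sum.inl w) ≠ 0 → ∀ i,
    pos w i = pos (parW w) i + T.lam (Sum.inl w) * (s w i : ℚ)
  balance : ∀ w, T.rk (Sum.inl w) ≠ 0 → ∀ i,
    ∑ ρ, (if T.Anc (Sum.inl w) (Sum.inr ρ) then (σ ρ i : ℚ) else 0) = s w i
  r : ℕ
  r_pos : 0 < r
  c : ℕ → W
  c_r : c r = c 0
  rk_c : ∀ j, T.rk (Sum.inl (c j)) = 0
  ci : W → ℕ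
  ci_lt : ∀ w, ci w < r
  ci_c : ∀ j < r, ci (c j) = j
  c_ci : ∀ w, T.rk (Sum.inl w) = 0 → c (ci w) = w
  ci_par : ∀ w, ci (parW w) = ci w
  mu : ℕ → ℚ
  mu_pos : ∀ j, 0 < mu j
  g : ℕ → Fin n → ℤ
  pos_circ : ∀ j < r, ∀ i, pos (c (j + 1)) i = pos (c j) i + mu j * (g j i : ℚ)
  circ_balance : ∀ (F : ℕ → ℚ) (i : Fin n), ∑ ρ, (σ ρ i : ℚ) * F (ci (b ρ)) =
    (∑ j ∈ Finset.range r, (g j i : ℚ) * (F (j + 1) - F j)) + g (r - 1) i * (F 0 - F r)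

namespace Skel

variable {n : ℕ} {W R : Type} [Fintype R] (S : Skel n W R)

/-- The image of the curve: vertices and the interiors of tree edges, rays, circuit edges. -/
def Img : Set (Fin n → ℚ) := {x | (∃ w, x = S.pos w) ∨
  (∃ w, ∃ d : ℚ, S.T.rk (Sum.inl w) ≠ 0 ∧ 0 < d ∧ d < S.T.lam (Sum.inl w) ∧
    x = fun i => S.pos (S.parW w) i + d * (S.s w i : ℚ)) ∨
  (∃ ρ, ∃ d : ℚ, 0 < d ∧ x = fun i => S.pos (S.b ρ) i + d * (S.σ ρ i : ℚ)) ∨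
  (∃ j, ∃ d : ℚ, j < S.r ∧ 0 < d ∧ d < S.mu j ∧
    x = fun i => S.pos (S.c j) i + d * (S.g j i : ℚ))}

/-- The height of a vertex above the circuit. -/
abbrev ht (p : W) : ℚ := S.T.height (Sum.inl p)

/-- The point of `K` representing a vertex. -/
abbrev cen {K : Type*} [Field K] (π : ℚ → K) (p : W) : K := S.T.center π (Sum.inl p)

/-- The point of `K` representing the end of a ray. -/
abbrev yy {K : Type*} [Field K] (π : ℚ → K) (ρ : R) : K := S.T.center π (Sum.inr ρ)

/-- The tropical evaluation at `z`, relative to the vertex `p`, of the product of the functions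
`(z - yy ρ) ^ σ ρ` over the rays `ρ` descending from `p`. -/
noncomputable def P {K : Type*} [Field K] (v : K → WithTop ℚ) (π : ℚ → K) (p : W) (z : K)
    (i : Fin n) : ℚ :=
  S.pos p i + ∑ ρ, if S.T.Anc (Sum.inl p) (Sum.inr ρ) then
    (S.σ ρ i : ℚ) * (val v (z - S.yy π ρ) - S.ht p) else 0

lemma anc_root_ci (w : W) : S.T.Anc (Sum.inl (S.c (S.ci w))) (Sum.inl w) := by
  induction h : S.T.rk (Sum.inl w) generalizing w with
  | zero => rw [S.c_ci w h]; exact S.T.anc_refl _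
  | succ k ih =>
    have h1 := S.T.rk_par (Sum.inl w) (by omega)
    rw [S.par_inl] at h1
    have := ih (S.parW w) (by omega)
    rw [S.ci_par, ← S.par_inl] at this
    exact S.T.anc_of_par this

lemma ci_of_anc {p w : W} (h : S.T.Anc (Sum.inl p) (Sum.inl w)) : S.ci w = S.ci p := by
  obtain ⟨j, hj⟩ := h
  induction j generalizing w with
  | zero =>
    obtain rfl : w = p := Sum.inl_injective hj
    rfl
  | succ j ih =>
    rw [Function.iterate_succ_apply, S.par_inl] at hj
    rw [← ih hj, S.ci_par]

lemma anc_c_iff {k : ℕ} (hk : k < S.r) (ρ : R) :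
    S.T.Anc (Sum.inl (S.c k)) (Sum.inr ρ) ↔ S.ci (S.b ρ) = k := by
  constructor
  · intro h
    rcases S.T.anc_cases h with h | h
    · cases h
    · rw [S.par_inr] at h
      rw [S.ci_of_anc h, S.ci_c k hk]
  · rintro rfl
    apply S.T.anc_of_par
    rw [S.par_inr]
    exact S.anc_root_ci _

lemma ray_anc {ρ ρ' : R} (h : S.T.Anc (Sum.inr ρ) (Sum.inr ρ')) : ρ' = ρ := by
  rcases S.T.anc_cases h with h | h
  · exact Sum.inr_injective h
  · rw [S.par_inr] at h
    exfalso
    have key : ∀ w, ¬ S.T.Anc (Sum.inr ρ) (Sum.inl w) := by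
      rintro w ⟨j, hj⟩
      induction j generalizing w with
      | zero => cases hj
      | succ j ih =>
        rw [Function.iterate_succ_apply, S.par_inl] at hj
        exact ih _ hj
    exact key _ h

section Field

variable {K : Type*} [Field K] {v : K → WithTop ℚ} (H : ValField v)
  {π : ℚ → K} (hπ : ∀ h : ℚ, v (π h) = (h : WithTop ℚ))
include H hπ

/-- Moving the base point of the evaluation along a tree edge does not change it. -/
lemma P_step {w : W} (hw : S.T.rk (Sum.inl w) ≠ 0) {z : K}
    (hz : (S.ht w : WithTop ℚ) ≤ v (z - S.cen π w)) (i : Fin n) :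
    S.P v π w z i = S.P v π (S.parW w) z i := by
  have hh := S.T.height_succ hw
  have hlam := S.T.lam_pos (Sum.inl w)
  rw [S.par_inl] at hh
  have hz' : (S.T.height (S.T.par (Sum.inl w)) : WithTop ℚ) < v (z - S.cen π w) := by
    refine lt_of_lt_of_le (WithTop.coe_lt_coe.2 ?_) hz
    rw [S.par_inl]; simp only [ht]; linarith
  have e : S.P v π (S.parW w) z i = S.pos (S.parW w) i + ∑ ρ,
      ((if S.T.Anc (Sum.inl w) (Sum.inr ρ) then
        (S.σ ρ i : ℚ) * (val v (z - S.yy π ρ) - S.ht w) else 0)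
      + S.T.lam (Sum.inl w) * (if S.T.Anc (Sum.inl w) (Sum.inr ρ) then (S.σ ρ i : ℚ) else 0)) := by
    rw [P]
    congr 1
    refine Finset.sum_congr rfl fun ρ _ => ?_
    by_cases h1 : S.T.Anc (Sum.inl w) (Sum.inr ρ)
    · have h2 : S.T.Anc (Sum.inl (S.parW w)) (Sum.inr ρ) := by
        rw [← S.par_inl]; exact S.T.anc_par h1
      rw [if_pos h1, if_pos h2, if_pos h1]
      simp only [ht, hh]; ring
    · rw [if_neg h1, if_neg h1, mul_zero, add_zero]
      split_ifs with h2
      · obtain ⟨c, hc, hcp, hca⟩ := S.T.exists_child h2 (by simp)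
        have hne : Sum.inl w ≠ c := by rintro rfl; exact h1 hca
        have := S.T.v_sub_of_ne H hπ hw hc (by rw [hcp, S.par_inl]) hne hca hz'
        rw [val_of_eq this, S.par_inl]; ring
      · rfl
  rw [e, Finset.sum_add_distrib, ← Finset.mul_sum, S.balance w hw, P, S.pos_edge w hw]
  ring

lemma P_root (p : W) {z : K} (hz : (S.ht p : WithTop ℚ) ≤ v (z - S.cen π p)) (i : Fin n) :
    S.P v π (S.c (S.ci p)) z i = S.P v π p z i ∧ 0 ≤ v z := by
  induction h : S.T.rk (Sum.inl p) generalizing p with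
  | zero =>
    rw [S.c_ci p h]
    rw [ht, S.T.height_root h, cen, S.T.center_root π h, sub_zero] at hz
    exact ⟨rfl, hz⟩
  | succ k ih =>
    have hr : S.T.rk (Sum.inl p) ≠ 0 := by omega
    have h1 := S.T.rk_par (Sum.inl p) hr
    rw [S.par_inl] at h1
    have hanc : S.T.Anc (Sum.inl (S.parW p)) (Sum.inl p) := by
      rw [← S.par_inl]; exact S.T.anc_par (S.T.anc_refl _)
    have h2 := H.le_add ((WithTop.coe_le_coe.2 (S.T.height_le_of_anc hanc)).trans hz)
      (S.T.le_v_center_sub H hπ hanc)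
    rw [sub_add_sub_cancel] at h2
    have := ih (S.parW p) h2 (by omega)
    rwa [S.ci_par, ← S.P_step H hπ hr hz] at this

/-- In the disc of a vertex, outside the residue classes of its children, the evaluation gives
the vertex itself. -/
lemma P_vertex (p : W) {z : K} (hz : (S.ht p : WithTop ℚ) ≤ v (z - S.cen π p))
    (hnc : ∀ c, S.T.rk c ≠ 0 → S.T.par c = Sum.inl p →
      ¬ (S.ht p : WithTop ℚ) < v (z - S.T.center π c)) (i : Fin n) :
    S.P v π p z i = S.pos p i := by
  rw [P, Finset.sum_eq_zero, add_zero]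
  intro ρ _
  split_ifs with h2
  · obtain ⟨c, hc, hcp, hca⟩ := S.T.exists_child h2 (by simp)
    have := S.T.v_sub_of_not_lt H hπ (z := z) hc hca (by rwa [hcp])
      (by rw [hcp]; exact hnc c hc hcp)
    rw [val_of_eq this, hcp, ht]; ring
  · rfl

/-- In an annulus belonging to a tree edge the evaluation gives the point of that edge. -/
lemma P_edge {w : W} (hw : S.T.rk (Sum.inl w) ≠ 0) {z : K} {d : ℚ} (hd : 0 < d)
    (hd' : d < S.T.lam (Sum.inl w))
    (hz : v (z - S.cen π w) = ((S.ht (S.parW w) + d : ℚ) : WithTop ℚ)) (i : Fin n) :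
    S.P v π (S.parW w) z i = S.pos (S.parW w) i + d * (S.s w i : ℚ) := by
  have hh := S.T.height_succ hw
  rw [S.par_inl] at hh
  rw [P, ← S.balance w hw, Finset.mul_sum]
  congr 1
  refine Finset.sum_congr rfl fun ρ _ => ?_
  by_cases h1 : S.T.Anc (Sum.inl w) (Sum.inr ρ)
  · have h2 : S.T.Anc (Sum.inl (S.parW w)) (Sum.inr ρ) := by
      rw [← S.par_inl]; exact S.T.anc_par h1
    rw [if_pos h1, if_pos h2]
    have h3 := S.T.le_v_center_sub H hπ h1
    have h4 : v (z - S.yy π ρ) = v (z - S.cen π w) := by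
      rw [H.v_sub_comm z, H.v_sub_comm z]
      rw [H.sub_eq (z := S.cen π w)]
      refine lt_of_lt_of_le ?_ h3
      rw [H.v_sub_comm, hz, hh]
      exact WithTop.coe_lt_coe.2 (by simp only [ht]; linarith)
    rw [hz] at h4
    rw [val_of_eq h4]; ring
  · rw [if_neg h1, mul_zero]
    split_ifs with h2
    · obtain ⟨c, hc, hcp, hca⟩ := S.T.exists_child h2 (by simp)
      have hne : Sum.inl w ≠ c := by rintro rfl; exact h1 hca
      have := S.T.v_sub_of_ne H hπ (z := z) hw hc (by rw [hcp, S.par_inl]) hne hca (by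
        rw [hz, S.par_inl]; exact WithTop.coe_lt_coe.2 (by simp only [ht]; linarith))
      rw [val_of_eq this, S.par_inl, ht]; ring
    · rfl

/-- In a punctured disc belonging to a ray the evaluation gives the point of that ray. -/
lemma P_ray (ρ : R) {z : K} {d : ℚ} (hd : 0 < d)
    (hz : v (z - S.yy π ρ) = ((S.ht (S.b ρ) + d : ℚ) : WithTop ℚ)) (i : Fin n) :
    S.P v π (S.b ρ) z i = S.pos (S.b ρ) i + d * (S.σ ρ i : ℚ) := by
  rw [P]
  congr 1
  rw [Finset.sum_eq_single ρ]
  · rw [if_pos, val_of_eq hz]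
    · ring
    · rw [← S.par_inr]; exact S.T.anc_par (S.T.anc_refl _)
  · intro ρ' _ hne
    split_ifs with h2
    · obtain ⟨c, hc, hcp, hca⟩ := S.T.exists_child h2 (by simp)
      have hne : Sum.inr ρ ≠ c := by rintro rfl; exact hne (S.ray_anc hca)
      have := S.T.v_sub_of_ne H hπ (z := z) (S.rk_inr ρ) hc (by rw [hcp, S.par_inr]) hne hca (by
        rw [S.par_inr]
        exact lt_of_lt_of_eq (WithTop.coe_lt_coe.2 (by simp only [ht]; linarith)) hz.symm)
      rw [val_of_eq this, S.par_inr, ht]; ring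
    · rfl
  · simp

/-- The evaluation at any point of the disc of a vertex, other than the ends of the rays
descending from it, lies on the image of the curve. -/
lemma P_mem [Finite W] (p : W) {z : K} (hz : (S.ht p : WithTop ℚ) ≤ v (z - S.cen π p))
    (hy : ∀ ρ, S.T.Anc (Sum.inl p) (Sum.inr ρ) → z ≠ S.yy π ρ) : S.P v π p z ∈ S.Img := by
  obtain ⟨B, hB⟩ : ∃ B, ∀ w, S.T.rk (Sum.inl w) ≤ B := by
    obtain ⟨B, hB⟩ := (Set.finite_range fun w => S.T.rk (Sum.inl w)).bddAbove
    exact ⟨B, fun w => hB ⟨w, rfl⟩⟩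
  -- induction towards the leaves
  induction hk : B - S.T.rk (Sum.inl p) using Nat.strong_induction_on generalizing p with
  | _ k ih =>
  by_cases hnc : ∀ c, S.T.rk c ≠ 0 → S.T.par c = Sum.inl p →
      ¬ (S.ht p : WithTop ℚ) < v (z - S.T.center π c)
  · exact Or.inl ⟨p, funext fun i => S.P_vertex H hπ p hz hnc i⟩
  push Not at hnc
  obtain ⟨c, hc, hcp, hlt⟩ := hnc
  rcases c with w | ρ
  · rw [S.par_inl] at hcp
    obtain rfl := Sum.inl_injective hcp
    by_cases hw : (S.ht w : WithTop ℚ) ≤ v (z - S.cen π w)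
    · have : S.P v π (S.parW w) z = S.P v π w z :=
        funext fun i => (S.P_step H hπ hc hw i).symm
      rw [this]
      refine ih _ ?_ w hw (fun ρ hρ => hy ρ ?_) rfl
      · have h1 := S.T.rk_par _ hc
        rw [S.par_inl] at h1
        have := hB w
        omega
      · rw [← S.par_inl]; exact S.T.anc_par hρ
    · push Not at hw
      have hne := H.ne_zero_of_lt hw
      rw [H.coe_val hne, WithTop.coe_lt_coe] at hw hlt
      have hh := S.T.height_succ hc
      rw [S.par_inl] at hh
      simp only [ht] at hw hlt
      refine Or.inr (Or.inl ⟨w, val v (z - S.cen π w) - S.ht (S.parW w), hc, ?_, ?_,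
        funext fun i => S.P_edge H hπ hc ?_ ?_ ?_ i⟩)
      any_goals simp only [ht]; linarith
      any_goals rw [H.coe_val hne]; congr 1; ring
  · rw [S.par_inr] at hcp
    obtain rfl := Sum.inl_injective hcp
    have hne := sub_ne_zero.2 (hy ρ (by rw [← S.par_inr]; exact S.T.anc_par (S.T.anc_refl _)))
    rw [H.coe_val hne, WithTop.coe_lt_coe] at hlt
    refine Or.inr (Or.inr (Or.inl ⟨ρ, val v (z - S.yy π ρ) - S.ht (S.b ρ), ?_,
        funext fun i => S.P_ray H hπ ρ ?_ ?_ i⟩))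
    any_goals linarith
    rw [H.coe_val hne]; congr 1; ring

end Field

end Skel

end TropLift

/-! ### Evaluation on the whole skeleton -/

namespace TropLift

/-- Every ball of `K` contains points outside a given finite set. -/
lemma ValField.exists_near {K : Type*} [Field K] {v : K → WithTop ℚ} (H : ValField v)
    {Y : Set K} (hY : Y.Finite) (z₀ : K) (B : ℚ) :
    ∃ z, z ∉ Y ∧ (B : WithTop ℚ) < v (z - z₀) := by
  choose π hπ using H.surj
  have hinj : Function.Injective fun h : ℚ => z₀ + π h := by
    intro a b hab
    have h1 : π a = π b := add_left_cancel hab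
    have h2 := hπ a
    rw [h1, hπ b, WithTop.coe_eq_coe] at h2
    exact h2.symm
  have hinf : ((fun h : ℚ => z₀ + π h) '' Set.Ioi B).Infinite :=
    (Set.Ioi_infinite B).image hinj.injOn
  obtain ⟨z, ⟨h, hh, rfl⟩, hz⟩ := hinf.exists_notMem_finite hY
  refine ⟨_, hz, ?_⟩
  simp only [add_sub_cancel_left, hπ]
  exact WithTop.coe_lt_coe.2 hh

/-- The residue class of a node other than a root is an integer `≥ 2`. -/
lemma Forest.center_digit {N : Type} (T : Forest N) {K : Type*} [Field K] {v : K → WithTop ℚ}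
    (H : ValField v) {π : ℚ → K} (hπ : ∀ h : ℚ, v (π h) = (h : WithTop ℚ)) (hπ1 : π 0 = 1)
    {x : N} (hx : T.rk x ≠ 0) : ∃ m : ℕ, 2 ≤ m ∧ 0 < v (T.center π x - m) := by
  induction h : T.rk x generalizing x with
  | zero => exact absurd h hx
  | succ k ih =>
    by_cases hp : T.rk (T.par x) = 0
    · refine ⟨T.idx x, T.idx_two x, ?_⟩
      rw [T.center_succ π hx, T.center_root π hp, T.height_root hp, hπ1]
      simp [H.v_zero]
    · have h1 := T.rk_par x hx
      obtain ⟨m, hm, hlt⟩ := ih hp (by omega)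
      refine ⟨m, hm, ?_⟩
      have h2 := T.v_center_sub_par H hπ hx
      have h3 : 0 < T.height (T.par x) := by
        rw [T.height_succ hp]
        linarith [T.lam_pos (T.par x), T.height_nonneg (T.par (T.par x))]
      have := H.lt_add (a := 0) (h2 ▸ WithTop.coe_pos.2 h3) hlt
      rwa [sub_add_sub_cancel] at this

namespace Skel

variable {n : ℕ} {W R : Type} [Fintype R] (S : Skel n W R)

/-- Position of the circuit vertex `c j` on the circle `ℚ / (xx r)`. Slopes along the circuit
are doubled in the parametrization, so lengths are halved. -/
def xx (j : ℕ) : ℚ := ∑ l ∈ Finset.range j, S.mu l / 2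

lemma xx_succ (j : ℕ) : S.xx (j + 1) = S.xx j + S.mu j / 2 := Finset.sum_range_succ _ _

lemma xx_zero : S.xx 0 = 0 := rfl

lemma xx_strictMono : StrictMono S.xx :=
  strictMono_nat_of_lt_succ fun j => by rw [xx_succ]; linarith [S.mu_pos j]

lemma exists_xx {X : ℚ} (h0 : 0 ≤ X) (h1 : X < S.xx S.r) :
    ∃ k < S.r, S.xx k ≤ X ∧ X < S.xx (k + 1) := by
  have : ∀ m, X < S.xx m → ∃ k < m, S.xx k ≤ X ∧ X < S.xx (k + 1) := by
    intro m
    induction m with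
    | zero => intro h; rw [xx_zero] at h; linarith
    | succ m ih =>
      intro h
      by_cases hm : S.xx m ≤ X
      · exact ⟨m, by omega, hm, h⟩
      · obtain ⟨k, hk, h'⟩ := ih (not_le.1 hm)
        exact ⟨k, by omega, h'⟩
  exact this _ h1

/-- The piecewise linear function on the circle describing the valuation of the map at a
generic point of valuation `X`. -/
def G (X : ℚ) (i : Fin n) : ℚ :=
  2 * (∑ ρ, (S.σ ρ i : ℚ) * min 0 (X - S.xx (S.ci (S.b ρ)))) + 2 * S.g (S.r - 1) i * X
    + (S.pos (S.c 0) i - 2 * S.xx S.r * S.g (S.r - 1) i)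

/-- `G` parametrizes the circuit: this is the integrated form of the zero tension condition at its
vertices. -/
lemma G_eq {k : ℕ} (hk : k < S.r) {X : ℚ} (h1 : S.xx k ≤ X) (h2 : X ≤ S.xx (k + 1))
    (i : Fin n) : S.G X i = S.pos (S.c k) i + 2 * S.g k i * (X - S.xx k) := by
  have mono := S.xx_strictMono.monotone
  have hlow : ∀ j ≤ k, min 0 (X - S.xx j) = 0 := fun j hj => by
    rw [min_eq_left]; linarith [mono hj]
  have hhigh : ∀ j, k + 1 ≤ j → min 0 (X - S.xx j) = X - S.xx j := fun j hj => by
    rw [min_eq_right]; linarith [mono hj]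
  have hA : ∑ j ∈ Finset.range k,
      (S.g j i : ℚ) * (min 0 (X - S.xx (j + 1)) - min 0 (X - S.xx j)) = 0 := by
    refine Finset.sum_eq_zero fun j hj => ?_
    have := Finset.mem_range.1 hj
    rw [hlow j (by omega), hlow (j + 1) (by omega)]; ring
  have hB : ∀ m, k + 1 ≤ m → m ≤ S.r → ∑ j ∈ Finset.range m,
      (S.g j i : ℚ) * (min 0 (X - S.xx (j + 1)) - min 0 (X - S.xx j))
      = (S.pos (S.c k) i - S.pos (S.c m) i) / 2 + S.g k i * (X - S.xx k) := by
    intro m hm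
    induction m, hm using Nat.le_induction with
    | base =>
      intro hr
      rw [Finset.sum_range_succ, hA, hlow k le_rfl, hhigh (k + 1) le_rfl, S.pos_circ k hk,
        S.xx_succ]
      ring
    | succ m hm ih =>
      intro hr
      rw [Finset.sum_range_succ, ih (by omega), hhigh m hm, hhigh (m + 1) (by omega),
        S.pos_circ m (by omega), S.xx_succ]
      ring
  rw [G, S.circ_balance fun j => min 0 (X - S.xx j)]
  rw [hB S.r hk le_rfl, hlow 0 (by omega), hhigh S.r hk, S.c_r]
  ring

section Field

variable {K : Type*} [Field K] {v : K → WithTop ℚ} (H : ValField v)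
  {π : ℚ → K} (hπ : ∀ h : ℚ, v (π h) = (h : WithTop ℚ)) (hπ1 : π 0 = 1)
  {t : ℕ → K} (ht : ∀ j ≤ S.r, v (t j) = (S.xx j : WithTop ℚ))

/-- The two points of `K^*` attached to a ray. They are exchanged by the inversion
`u ↦ t ^ 2 / u` centred at the root of the ray, so their product is `t ^ 2`. -/
def zz (π : ℚ → K) (t : ℕ → K) : R × Bool → K
  | (ρ, true) => t (S.ci (S.b ρ)) * S.yy π ρ
  | (ρ, false) => t (S.ci (S.b ρ)) * (S.yy π ρ)⁻¹

/-- The valuations of the coordinates of the map at a point of the annulus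
`0 ≤ v(u) < xx r`, up to identifying theta functions with their factor `1 - u / z`. -/
noncomputable def F (v : K → WithTop ℚ) (π : ℚ → K) (t : ℕ → K) (u : K) (i : Fin n) : ℚ :=
  (∑ p : R × Bool, (S.σ p.1 i : ℚ) * val v (1 - u / S.zz π t p))
    + 2 * S.g (S.r - 1) i * val v u + (S.pos (S.c 0) i - 2 * S.xx S.r * S.g (S.r - 1) i)

include H hπ hπ1

lemma yy_digit (ρ : R) : ∃ m : ℕ, 2 ≤ m ∧ 0 < v (S.yy π ρ - m) :=
  S.T.center_digit H hπ hπ1 (S.rk_inr ρ)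

omit hπ hπ1 in
lemma v_of_digit {z : K} {m : ℕ} (hm : 1 ≤ m) (h : 0 < v (z - m)) : v z = 0 := by
  have h1 : v ((m : K)) = 0 := by
    have := H.int (m : ℤ) (by omega)
    rwa [Int.cast_natCast] at this
  have := H.add_eq (x := (m : K)) (y := z - m) (by rwa [h1])
  rwa [add_sub_cancel, h1] at this

lemma v_yy (ρ : R) : v (S.yy π ρ) = 0 := by
  obtain ⟨m, hm, h⟩ := S.yy_digit H hπ hπ1 ρ
  exact v_of_digit H (by omega) h

lemma yy_ne (ρ : R) : S.yy π ρ ≠ 0 := H.ne_zero_of_eq (a := 0) (S.v_yy H hπ hπ1 ρ)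

omit hπ hπ1 in
lemma val_one_sub {u z : K} (hu : u ≠ 0) (hz : z ≠ 0) (hne : val v u ≠ val v z) :
    val v (1 - u / z) = min 0 (val v u - val v z) := by
  have h0 := div_ne_zero hu hz
  have h1 := H.coe_val h0
  rw [H.val_div hu hz] at h1
  rcases lt_or_gt_of_ne hne with h | h
  · rw [min_eq_right (by linarith), ← H.val_div hu hz]
    rw [val, H.one_sub_eq_of_lt, ← val]
    rw [h1, ← WithTop.coe_zero, WithTop.coe_lt_coe]; linarith
  · rw [min_eq_left (by linarith)]
    apply val_of_eq
    rw [H.one_sub_eq]; · rfl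
    rw [h1, WithTop.coe_pos]; linarith

include ht

omit hπ hπ1 in
lemma t_ne {j : ℕ} (hj : j ≤ S.r) : t j ≠ 0 := H.ne_zero_of_eq (ht j hj)

lemma zz_ne (p : R × Bool) : S.zz π t p ≠ 0 := by
  have h := S.t_ne H ht (S.ci_lt (S.b p.1)).le
  rcases p with ⟨ρ, _ | _⟩
  · exact mul_ne_zero h (inv_ne_zero (S.yy_ne H hπ hπ1 ρ))
  · exact mul_ne_zero h (S.yy_ne H hπ hπ1 ρ)

lemma val_zz (p : R × Bool) : val v (S.zz π t p) = S.xx (S.ci (S.b p.1)) := by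
  have hj := (S.ci_lt (S.b p.1)).le
  have h := S.t_ne H ht hj
  have h1 : val v (S.yy π p.1) = 0 := val_of_eq (S.v_yy H hπ hπ1 p.1)
  have h2 := val_of_eq (ht _ hj)
  have h3 := S.yy_ne H hπ hπ1 p.1
  rcases p with ⟨ρ, _ | _⟩
  · show val v (t _ * _) = _
    rw [H.val_mul h (inv_ne_zero h3), H.val_inv h3, h1, h2]; simp
  · show val v (t _ * _) = _
    rw [H.val_mul h h3, h1, h2]; simp

lemma F_off {u : K} (hu : u ≠ 0) (hX : ∀ j < S.r, val v u ≠ S.xx j) (i : Fin n) :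
    S.F v π t u i = S.G (val v u) i := by
  rw [F, G, Fintype.sum_prod_type, Finset.mul_sum]
  congr 2
  refine Finset.sum_congr rfl fun ρ _ => ?_
  have key : ∀ bb, val v (1 - u / S.zz π t (ρ, bb))
      = min 0 (val v u - S.xx (S.ci (S.b ρ))) := by
    intro bb
    have hz := S.val_zz H hπ hπ1 ht (ρ, bb)
    rw [val_one_sub H hu (S.zz_ne H hπ hπ1 ht _), hz]
    rw [hz]; exact hX _ (S.ci_lt _)
  rw [Fintype.sum_bool, key, key]; ring

/-- At the root of a tree the two copies of the tree contribute their evaluations at `x` and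
at `x⁻¹`. -/
lemma F_on {k : ℕ} (hk : k < S.r) {x : K} (hx : v x = 0) (i : Fin n) :
    S.F v π t (t k * x) i
      = S.P v π (S.c k) x i + S.P v π (S.c k) x⁻¹ i - S.pos (S.c k) i := by
  have hx0 : x ≠ 0 := H.ne_zero_of_eq (a := 0) hx
  have ht0 := S.t_ne H ht hk.le
  have hvx : val v x = 0 := val_of_eq hx
  have hval : val v (t k * x) = S.xx k := by
    rw [H.val_mul ht0 hx0, hvx, val_of_eq (ht k hk.le), add_zero]
  have hG := S.G_eq hk le_rfl (S.xx_strictMono (Nat.lt_succ_self k)).le i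
  have hht : S.ht (S.c k) = 0 := S.T.height_root (S.rk_c k)
  have e : S.F v π t (t k * x) i = S.G (S.xx k) i + ∑ ρ,
      ((if S.T.Anc (Sum.inl (S.c k)) (Sum.inr ρ) then
        (S.σ ρ i : ℚ) * (val v (x - S.yy π ρ) - S.ht (S.c k)) else 0) +
      (if S.T.Anc (Sum.inl (S.c k)) (Sum.inr ρ) then
        (S.σ ρ i : ℚ) * (val v (x⁻¹ - S.yy π ρ) - S.ht (S.c k)) else 0)) := by
    rw [F, G, Fintype.sum_prod_type, Finset.mul_sum, hval, add_right_comm _ _ (Finset.sum _ _),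
      add_right_comm _ _ (Finset.sum _ _), ← Finset.sum_add_distrib]
    congr 2
    refine Finset.sum_congr rfl fun ρ _ => ?_
    rw [Fintype.sum_bool]
    simp only [S.anc_c_iff hk]
    have hy0 := S.yy_ne H hπ hπ1 ρ
    have hvy : val v (S.yy π ρ) = 0 := val_of_eq (S.v_yy H hπ hπ1 ρ)
    by_cases hc : S.ci (S.b ρ) = k
    · have e1 : 1 - t k * x / S.zz π t (ρ, true) = (-(S.yy π ρ)⁻¹) * (x - S.yy π ρ) := by
        show 1 - t k * x / (t (S.ci (S.b ρ)) * S.yy π ρ) = _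
        rw [hc]; field_simp; ring
      have e2 : 1 - t k * x / S.zz π t (ρ, false) = x * (x⁻¹ - S.yy π ρ) := by
        show 1 - t k * x / (t (S.ci (S.b ρ)) * (S.yy π ρ)⁻¹) = _
        rw [hc]; field_simp
      have e3 : val v (1 - t k * x / S.zz π t (ρ, true)) = val v (x - S.yy π ρ) := by
        have : v (-(S.yy π ρ)⁻¹) = 0 := by
          rw [H.v_neg, H.coe_val (inv_ne_zero hy0), H.val_inv hy0, hvy, neg_zero]; rfl
        rw [e1, val, H.mul, this, zero_add, ← val]
      have e4 : val v (1 - t k * x / S.zz π t (ρ, false)) = val v (x⁻¹ - S.yy π ρ) := by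
        rw [e2, val, H.mul, hx, zero_add, ← val]
      rw [e3, e4, if_pos hc, if_pos hc, hht, hc]
      simp
    · rw [if_neg hc, if_neg hc]
      have key : ∀ bb, val v (1 - t k * x / S.zz π t (ρ, bb))
          = min 0 (S.xx k - S.xx (S.ci (S.b ρ))) := by
        intro bb
        have hz := S.val_zz H hπ hπ1 ht (ρ, bb)
        rw [val_one_sub H (mul_ne_zero ht0 hx0) (S.zz_ne H hπ hπ1 ht _), hz, hval]
        rw [hz, hval]
        exact fun h => hc (S.xx_strictMono.injective h).symm
      rw [key, key]; ring
  rw [e, hG, Finset.sum_add_distrib, P, P]; ring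

omit ht

/-- If no ray end lies in the residue class of `x`, the evaluation at `x` is the root. -/
lemma P_trivial {k : ℕ} {x : K} (hx : v x = 0) (h : ∀ ρ, ¬ 0 < v (x - S.yy π ρ)) (i : Fin n) :
    S.P v π (S.c k) x i = S.pos (S.c k) i := by
  have hht : S.ht (S.c k) = 0 := S.T.height_root (S.rk_c k)
  rw [P, Finset.sum_eq_zero, add_zero]
  intro ρ _
  have h1 : v (x - S.yy π ρ) = ((0 : ℚ) : WithTop ℚ) :=
    le_antisymm (not_lt.1 (h ρ)) (H.le_sub hx.ge (S.v_yy H hπ hπ1 ρ).ge)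
  rw [val_of_eq h1, hht]; simp

/-- The residue classes of the ray ends are integers `≥ 2`, hence disjoint from the inverses of
positive integers: residue characteristic zero keeps the two copies of the trees apart. -/
lemma inv_not_near {x : K} {m : ℕ} (hm : 1 ≤ m) (hx : 0 < v (x - m)) (ρ : R) :
    ¬ 0 < v (x⁻¹ - S.yy π ρ) := by
  intro h
  obtain ⟨m', hm', h'⟩ := S.yy_digit H hπ hπ1 ρ
  have hv := v_of_digit H hm hx
  have hx0 : x ≠ 0 := H.ne_zero_of_eq (a := 0) hv
  have h2 := H.lt_add h h'
  rw [sub_add_sub_cancel] at h2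
  have hvi : v x⁻¹ = 0 := by
    rw [H.coe_val (inv_ne_zero hx0), H.val_inv hx0, val_of_eq (a := 0) hv, neg_zero]; rfl
  have hvm : v ((m : K)) = 0 := by
    have := H.int (m : ℤ) (by omega)
    rwa [Int.cast_natCast] at this
  have h3 : 0 < v ((x - m) * x⁻¹ + m * (x⁻¹ - m')) := by
    apply H.lt_add
    · rwa [H.mul, hvi, add_zero]
    · rwa [H.mul, hvm, zero_add]
  have e : (x - m) * x⁻¹ + m * (x⁻¹ - m') = ((1 - m * m' : ℤ) : K) := by
    push_cast; field_simp; ring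
  rw [e, H.int] at h3
  · exact lt_irrefl _ h3
  · have : 1 * 2 ≤ (m : ℤ) * m' := by gcongr <;> omega
    omega

include ht

lemma F_mem [Finite W] {u : K} (hu : u ≠ 0) (h0 : 0 ≤ val v u) (h1 : val v u < S.xx S.r)
    (hz : ∀ p, u ≠ S.zz π t p) : S.F v π t u ∈ S.Img := by
  obtain ⟨k, hk, hk1, hk2⟩ := S.exists_xx h0 h1
  rcases hk1.lt_or_eq with hlt | heq
  · refine Or.inr (Or.inr (Or.inr ⟨k, 2 * (val v u - S.xx k), hk, by linarith, ?_, ?_⟩))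
    · rw [S.xx_succ] at hk2; linarith
    · funext i
      rw [S.F_off H hπ hπ1 ht hu, S.G_eq hk hk1 hk2.le]
      · ring
      · intro j _ hj
        rw [hj] at hlt hk2
        have := S.xx_strictMono.lt_iff_lt.1 hlt
        have := S.xx_strictMono.lt_iff_lt.1 hk2
        omega
  · have ht0 := S.t_ne H ht hk.le
    obtain ⟨x, rfl⟩ : ∃ x, u = t k * x := ⟨u / t k, by field_simp⟩
    have hx0 : x ≠ 0 := by rintro rfl; simp at hu
    have hvx : val v x = 0 := by
      rw [H.val_mul ht0 hx0, val_of_eq (ht k hk.le)] at heq; linarith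
    have hx : v x = 0 := by rw [H.coe_val hx0, hvx]; rfl
    have hxi : v x⁻¹ = 0 := by
      rw [H.coe_val (inv_ne_zero hx0), H.val_inv hx0, hvx, neg_zero]; rfl
    have hF := S.F_on H hπ hπ1 ht hk hx
    have hht : S.ht (S.c k) = 0 := S.T.height_root (S.rk_c k)
    have hcen : S.cen π (S.c k) = 0 := S.T.center_root π (S.rk_c k)
    by_cases hnear : ∃ ρ, 0 < v (x - S.yy π ρ)
    · obtain ⟨ρ, hρ⟩ := hnear
      obtain ⟨m, hm, hy⟩ := S.yy_digit H hπ hπ1 ρ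
      have hd := H.lt_add hρ hy
      rw [sub_add_sub_cancel] at hd
      have hi := S.P_trivial H hπ hπ1 (k := k) hxi
        (S.inv_not_near H hπ hπ1 (by omega : 1 ≤ m) hd)
      have : S.F v π t (t k * x) = S.P v π (S.c k) x := funext fun i => by
        rw [hF, hi]; ring
      rw [this]
      apply S.P_mem H hπ
      · rw [hht, hcen, sub_zero, hx]; rfl
      · intro ρ' hρ' h
        rw [S.anc_c_iff hk] at hρ'
        exact hz (ρ', true) (by rw [h, ← hρ']; rfl)
    · push Not at hnear
      have hi := S.P_trivial H hπ hπ1 (k := k) hx (fun ρ => not_lt.2 (hnear ρ))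
      have : S.F v π t (t k * x) = S.P v π (S.c k) x⁻¹ := funext fun i => by
        rw [hF, hi]; ring
      rw [this]
      apply S.P_mem H hπ
      · rw [hht, hcen, sub_zero, hxi]; rfl
      · intro ρ hρ h
        rw [S.anc_c_iff hk] at hρ
        exact hz (ρ, false) (by rw [← hρ, zz, ← h, inv_inv])

/-- A point in the disc of a vertex `p` whose residue is a positive integer gives a point of
the annulus at which the map takes the value of the tree evaluation at `p`. -/
lemma F_tree {p : W} {z : K} (hz : (S.ht p : WithTop ℚ) ≤ v (z - S.cen π p)) {m : ℕ}
    (hm : 1 ≤ m) (hd : 0 < v (z - m)) : S.F v π t (t (S.ci p) * z) = S.P v π p z := by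
  funext i
  have hv := v_of_digit H hm hd
  have hz0 : z ≠ 0 := H.ne_zero_of_eq (a := 0) hv
  have hvi : v z⁻¹ = 0 := by
    rw [H.coe_val (inv_ne_zero hz0), H.val_inv hz0, val_of_eq (a := 0) hv, neg_zero]; rfl
  rw [S.F_on H hπ hπ1 ht (S.ci_lt p) hv, (S.P_root H hπ p hz i).1,
    S.P_trivial H hπ hπ1 hvi (S.inv_not_near H hπ hπ1 hm hd)]
  ring

omit hπ hπ1 in
/-- A generic point near `x₀ ≠ 0` yields, after scaling by `t k`, a generic point of the
annulus. -/
lemma exists_tree_pt {k : ℕ} (hk : k < S.r) {Y : Set K} (hY : Y.Finite) (x₀ : K) (B : ℚ) :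
    ∃ z, t k * z ∉ Y ∧ (∀ p, t k * z ≠ S.zz π t p) ∧ (B : WithTop ℚ) < v (z - x₀) := by
  have ht0 := S.t_ne H ht hk.le
  obtain ⟨z, hz, hB⟩ := H.exists_near
    ((hY.union (Set.finite_range (S.zz π t))).image fun y => (t k)⁻¹ * y) x₀ B
  refine ⟨z, fun h => hz ⟨_, Or.inl h, by field_simp⟩,
    fun p h => hz ⟨_, Or.inr ⟨p, h.symm⟩, by field_simp⟩, hB⟩

/-- Every point of the curve is attained, even outside a given finite set. -/
lemma exists_pt {x : Fin n → ℚ} (hx : x ∈ S.Img) {Y : Set K} (hY : Y.Finite) :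
    ∃ u, u ≠ 0 ∧ 0 ≤ val v u ∧ val v u < S.xx S.r ∧ u ∉ Y ∧ (∀ p, u ≠ S.zz π t p) ∧
      S.F v π t u = x := by
  have mono := S.xx_strictMono
  have hroot : ∀ (p : W) (z : K) (m : ℕ), 1 ≤ m → 0 < v (z - m) →
      t (S.ci p) * z ≠ 0 ∧ 0 ≤ val v (t (S.ci p) * z) ∧ val v (t (S.ci p) * z) < S.xx S.r := by
    intro p z m hm hd
    have hv := v_of_digit H hm hd
    have hz0 : z ≠ 0 := H.ne_zero_of_eq (a := 0) hv
    have ht0 := S.t_ne H ht (S.ci_lt p).le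
    have e : val v (t (S.ci p) * z) = S.xx (S.ci p) := by
      rw [H.val_mul ht0 hz0, val_of_eq (a := 0) hv, val_of_eq (ht _ (S.ci_lt p).le), add_zero]
    refine ⟨mul_ne_zero ht0 hz0, ?_, ?_⟩
    · rw [e, ← S.xx_zero]; exact mono.monotone (Nat.zero_le _)
    · rw [e]; exact mono (S.ci_lt p)
  have hpos : ∀ w, S.T.rk (Sum.inl w) ≠ 0 → 0 < S.ht w := fun w hw => by
    rw [Skel.ht, S.T.height_succ hw]
    linarith [S.T.lam_pos (Sum.inl w), S.T.height_nonneg (S.T.par (Sum.inl w))]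
  -- a point slightly displaced from the centre of a tree edge or ray
  have hdisp : ∀ (y : W ⊕ R) (hy : S.T.rk y ≠ 0) (d : ℚ) (z : K), 0 < d →
      ((S.T.height (S.T.par y) + d : ℚ) : WithTop ℚ) <
        v (z - (S.T.center π y + π (S.T.height (S.T.par y) + d))) →
      v (z - S.T.center π y) = ((S.T.height (S.T.par y) + d : ℚ) : WithTop ℚ) ∧
      (S.T.height (S.T.par y) : WithTop ℚ) ≤ v (z - S.T.center π (S.T.par y)) ∧
      ∃ m : ℕ, 1 ≤ m ∧ 0 < v (z - m) := by
    intro y hy d z hd hz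
    have h1 : v (z - S.T.center π y) = ((S.T.height (S.T.par y) + d : ℚ) : WithTop ℚ) := by
      rw [← hπ]
      have := H.add_eq (x := π (S.T.height (S.T.par y) + d))
        (y := z - (S.T.center π y + π (S.T.height (S.T.par y) + d))) (by rwa [hπ])
      rw [← this]; congr 1; ring
    have h2 : (S.T.height (S.T.par y) : WithTop ℚ) < v (z - S.T.center π y) := by
      rw [h1]; exact WithTop.coe_lt_coe.2 (by linarith)
    refine ⟨h1, ?_, ?_⟩
    · have := H.le_add h2.le (S.T.v_center_sub_par H hπ hy).ge
      rwa [sub_add_sub_cancel] at this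
    · obtain ⟨m, hm, hd⟩ := S.T.center_digit H hπ hπ1 hy
      refine ⟨m, by omega, ?_⟩
      have := H.lt_add (lt_of_le_of_lt (WithTop.coe_nonneg.2 (S.T.height_nonneg _)) h2) hd
      rwa [sub_add_sub_cancel] at this
  rcases hx with ⟨w, rfl⟩ | ⟨w, d, hw, hd, hd', rfl⟩ | ⟨ρ, d, hd, rfl⟩ | ⟨j, d, hj, hd, hd', rfl⟩
  · obtain ⟨z, h1, h2, h3⟩ := S.exists_tree_pt H ht (S.ci_lt w) hY
      (S.cen π w + π (S.ht w)) (S.ht w)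
    have hsub : ∀ a b : K, z - a = (z - (b + π (S.ht w))) + (b + π (S.ht w) - a) :=
      fun a b => by ring
    have hz : (S.ht w : WithTop ℚ) ≤ v (z - S.cen π w) := by
      rw [hsub _ (S.cen π w)]
      refine H.le_add h3.le ?_
      rw [add_sub_cancel_left, hπ]
    obtain ⟨m, hm, hd⟩ : ∃ m : ℕ, 1 ≤ m ∧ 0 < v (z - m) := by
      by_cases hw : S.T.rk (Sum.inl w) = 0
      · refine ⟨1, le_rfl, ?_⟩
        rw [Skel.ht, S.T.height_root hw, cen, S.T.center_root π hw, hπ1] at h3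
        simpa using h3
      · obtain ⟨m, hm, hd⟩ := S.T.center_digit H hπ hπ1 hw
        refine ⟨m, by omega, ?_⟩
        have := H.lt_add (lt_of_lt_of_le (WithTop.coe_pos.2 (hpos w hw)) hz) hd
        rwa [sub_add_sub_cancel] at this
    obtain ⟨a1, a2, a3⟩ := hroot w z m hm hd
    refine ⟨_, a1, a2, a3, h1, h2, ?_⟩
    rw [S.F_tree H hπ hπ1 ht hz hm hd]
    funext i
    refine S.P_vertex H hπ w hz (fun c hc hcp h => ?_) i
    -- `z` has digit `1` at the height of `w`, and the children have digits `≥ 2`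
    have h4 := S.T.center_succ π hc
    rw [hcp] at h4
    rw [H.v_sub_comm] at h3
    have h5 := H.lt_add h h3
    have e : z - S.T.center π c + (S.cen π w + π (S.ht w) - z)
        = ((1 - S.T.idx c : ℤ) : K) * π (S.ht w) := by
      rw [h4]; push_cast; ring
    have := S.T.idx_two c
    rw [e, H.mul, H.int _ (by omega), zero_add, hπ] at h5
    exact lt_irrefl _ h5
  · obtain ⟨z, h1, h2, h3⟩ := S.exists_tree_pt H ht (S.ci_lt w) hY
      (S.cen π w + π (S.ht (S.parW w) + d)) (S.ht (S.parW w) + d)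
    have := hdisp (Sum.inl w) hw d z hd
    rw [S.par_inl] at this
    obtain ⟨b1, b2, m, hm, hdm⟩ := this h3
    have hF := S.F_tree H hπ hπ1 ht b2 hm hdm
    rw [S.ci_par] at hF
    obtain ⟨a1, a2, a3⟩ := hroot w z m hm hdm
    exact ⟨_, a1, a2, a3, h1, h2, hF.trans (funext fun i => S.P_edge H hπ hw hd hd' b1 i)⟩
  · obtain ⟨z, h1, h2, h3⟩ := S.exists_tree_pt H ht (S.ci_lt (S.b ρ)) hY
      (S.yy π ρ + π (S.ht (S.b ρ) + d)) (S.ht (S.b ρ) + d)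
    have := hdisp (Sum.inr ρ) (S.rk_inr ρ) d z hd
    rw [S.par_inr] at this
    obtain ⟨b1, b2, m, hm, hdm⟩ := this h3
    have hF := S.F_tree H hπ hπ1 ht b2 hm hdm
    obtain ⟨a1, a2, a3⟩ := hroot _ z m hm hdm
    exact ⟨_, a1, a2, a3, h1, h2, hF.trans (funext fun i => S.P_ray H hπ ρ hd b1 i)⟩
  · have hs := S.xx_succ j
    obtain ⟨u, hu, hB⟩ := H.exists_near (hY.union (Set.finite_range (S.zz π t)))
      (π (S.xx j + d / 2)) (S.xx j + d / 2)
    have hvu : v u = ((S.xx j + d / 2 : ℚ) : WithTop ℚ) := by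
      have := H.add_eq (x := π (S.xx j + d / 2)) (y := u - π (S.xx j + d / 2)) (by rwa [hπ])
      rwa [add_sub_cancel, hπ] at this
    have hu0 := H.ne_zero_of_eq hvu
    have hval := val_of_eq hvu
    have hj1 := mono.monotone (Nat.succ_le_of_lt hj)
    have hj0 := mono.monotone (Nat.zero_le j)
    rw [S.xx_zero] at hj0
    rw [Nat.succ_eq_add_one] at hj1
    refine ⟨u, hu0, by linarith, by linarith, fun h => hu (Or.inl h),
      fun p h => hu (Or.inr ⟨p, h.symm⟩), funext fun i => ?_⟩
    rw [S.F_off H hπ hπ1 ht hu0, hval, S.G_eq hj (by linarith) (by linarith)]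
    · ring
    · intro l _ hl
      rw [hval] at hl
      have h1 := mono.lt_iff_lt.1 (show S.xx j < S.xx l by linarith)
      have h2 := mono.lt_iff_lt.1 (show S.xx l < S.xx (j + 1) by linarith)
      omega

end Field

end Skel

end TropLift

/-! ### Theta quotients on the Tate curve -/

namespace TropLift

section Quot

variable {K : Type*} [Field K] {v : K → WithTop ℚ} (H : ValField v) {q : K} (hq : q ≠ 0)
  (hq0 : 0 < v q)

include H hq hq0

lemma prod_theta_ne_zero {Z : Multiset K} {u : K} (hu : u ≠ 0) (hZ : ∀ z ∈ Z, z ≠ 0)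
    (hn : ∀ z ∈ Z, NotPow q (u / z)) : (Z.map fun z => theta v q (u / z)).prod ≠ 0 := by
  rw [Ne, Multiset.prod_eq_zero_iff, Multiset.mem_map]
  rintro ⟨z, hz, h⟩
  exact theta_ne_zero H hq hq0 (div_ne_zero hu (hZ z hz)) (hn z hz) h

lemma prod_theta_mul {Z : Multiset K} {u : K} (hu : u ≠ 0) (hZ : ∀ z ∈ Z, z ≠ 0)
    (hn : ∀ z ∈ Z, NotPow q (u / z)) :
    (Z.map fun z => theta v q (q * u / z)).prod
      = (-(1 / u)) ^ Multiset.card Z * Z.prod * (Z.map fun z => theta v q (u / z)).prod := by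
  induction Z using Multiset.induction_on with
  | empty => simp
  | cons z Z ih =>
    have hz := hZ z (Multiset.mem_cons_self _ _)
    rw [Multiset.map_cons, Multiset.prod_cons, ih (fun z h => hZ z (Multiset.mem_cons_of_mem h))
      (fun z h => hn z (Multiset.mem_cons_of_mem h)), Multiset.card_cons, Multiset.prod_cons,
      Multiset.map_cons, Multiset.prod_cons, mul_div_assoc,
      theta_mul_left H hq hq0 (div_ne_zero hu hz) (hn z (Multiset.mem_cons_self _ _)),
      one_div_div, pow_succ]
    ring

/-- Theta quotients with balanced zeros and poles are `q`-periodic. -/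
lemma phi_mul {Zp Zm : Multiset K} (hc : Multiset.card Zp = Multiset.card Zm)
    (hp : Zp.prod = Zm.prod) {u : K} (hu : u ≠ 0)
    (hZp : ∀ z ∈ Zp, z ≠ 0) (hnp : ∀ z ∈ Zp, NotPow q (u / z))
    (hZm : ∀ z ∈ Zm, z ≠ 0) (hnm : ∀ z ∈ Zm, NotPow q (u / z)) :
    phiVal (fun z u => theta v q (u / z)) Zp Zm (q * u)
      = phiVal (fun z u => theta v q (u / z)) Zp Zm u := by
  rw [phiVal, phiVal, prod_theta_mul H hq hq0 hu hZp hnp, prod_theta_mul H hq hq0 hu hZm hnm,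
    hc, hp]
  refine mul_div_mul_left _ _ (mul_ne_zero (pow_ne_zero _ ?_) ?_)
  · simpa using hu
  · rw [Ne, Multiset.prod_eq_zero_iff]
    exact fun h => hZm 0 h rfl

omit H hq0 in
lemma tateDom_zpow {n : ℕ} {Zp Zm : Fin n → Multiset K} {u : K} (h : TateDom q Zp Zm u) (m : ℤ) :
    TateDom q Zp Zm (q ^ m * u) := by
  have key : ∀ (j : ℤ) (z : K), q ^ m * u = q ^ j * z → u = q ^ (j - m) * z := by
    intro j z e
    rw [zpow_sub₀ hq, div_mul_eq_mul_div, ← e, mul_div_cancel_left₀ _ (zpow_ne_zero _ hq)]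
  exact ⟨mul_ne_zero (zpow_ne_zero _ hq) h.1, fun j i =>
    ⟨fun z hz e => (h.2 (j - m) i).1 z hz (key _ _ e),
      fun z hz e => (h.2 (j - m) i).2 z hz (key _ _ e)⟩⟩

omit H hq hq0 in
lemma notPow_of {u z : K} (hz : z ≠ 0) (h : ∀ j : ℤ, u ≠ q ^ j * z) : NotPow q (u / z) :=
  fun j e => h j (by rw [← e]; field_simp)

omit H hq0 in
/-- A function periodic under `q` on the domain is invariant under all powers of `q`. -/
lemma periodic_zpow {n : ℕ} {Zp Zm : Fin n → Multiset K} {f : K → K}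
    (hf : ∀ u, TateDom q Zp Zm u → f (q * u) = f u) {u : K} (h : TateDom q Zp Zm u) (m : ℤ) :
    f (q ^ m * u) = f u := by
  induction m with
  | zero => simp
  | succ i ih =>
    rw [← ih, ← hf _ (tateDom_zpow hq h i), zpow_add_one₀ hq]
    congr 1; ring
  | pred i ih =>
    rw [← ih, ← hf _ (tateDom_zpow hq h (-(i : ℤ) - 1)), zpow_sub_one₀ hq]
    congr 1; field_simp

end Quot

/-- The product over the positive part, divided by the product over the negative part, of an
integer combination of points. -/
lemma prod_div_prod {K : Type*} [Field K] {P : Type} [Fintype P] (σ : P → ℤ) (z : P → K)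
    (f : K → K) (hf : ∀ p, f (z p) ≠ 0) (A B : Multiset K) :
    (((∑ p, Multiset.replicate (σ p).toNat (z p)) + A).map f).prod
      / (((∑ p, Multiset.replicate (-σ p).toNat (z p)) + B).map f).prod
      = (∏ p, f (z p) ^ σ p) * ((A.map f).prod / (B.map f).prod) := by
  have key : ∀ a : P → ℕ, ((∑ p, Multiset.replicate (a p) (z p)).map f).prod
      = ∏ p, f (z p) ^ a p := by
    intro a
    rw [← Multiset.coe_mapAddMonoidHom, map_sum, Multiset.prod_sum]
    simp
  rw [Multiset.map_add, Multiset.map_add, Multiset.prod_add, Multiset.prod_add, key, key,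
    mul_div_mul_comm, ← Finset.prod_div_distrib]
  congr 1
  refine Finset.prod_congr rfl fun p _ => ?_
  rw [← zpow_natCast, ← zpow_natCast, ← zpow_sub₀ (hf p)]
  congr 1; omega

lemma exists_denom (x : ℕ → ℚ) (r : ℕ) : ∃ D : ℕ, 0 < D ∧ ∀ j ≤ r, ∃ m : ℤ, (m : ℚ) = D * x j := by
  refine ⟨∏ j ∈ Finset.range (r + 1), (x j).den, Finset.prod_pos fun j _ => (x j).pos, ?_⟩
  intro j hj
  obtain ⟨k, hk⟩ := Finset.dvd_prod_of_mem (fun j => (x j).den)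
    (Finset.mem_range.2 (Nat.lt_succ_of_le hj))
  refine ⟨k * (x j).num, ?_⟩
  rw [hk]
  push_cast
  rw [mul_comm ((x j).den : ℚ), mul_assoc, Rat.den_mul_eq_num]

namespace Skel

variable {n : ℕ} {W R : Type} [Fintype R] (S : Skel n W R)

lemma sum_σ (i : Fin n) : ∑ ρ, S.σ ρ i = 0 := by
  have := S.circ_balance (fun _ => 1) i
  simp only [mul_one, sub_self, mul_zero, Finset.sum_const_zero, add_zero] at this
  exact_mod_cast this

lemma sum_g_mu (i : Fin n) : ∑ j ∈ Finset.range S.r, S.mu j * (S.g j i : ℚ) = 0 := by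
  have : ∑ j ∈ Finset.range S.r, (S.pos (S.c (j + 1)) i - S.pos (S.c j) i) = 0 := by
    rw [Finset.sum_range_sub (fun j => S.pos (S.c j) i), S.c_r, sub_self]
  rw [← this]
  refine Finset.sum_congr rfl fun j hj => ?_
  rw [S.pos_circ j (Finset.mem_range.1 hj)]; ring

section Field

variable {K : Type*} [Field K] {v : K → WithTop ℚ} (H : ValField v)
  {π : ℚ → K} (hπ : ∀ h : ℚ, v (π h) = (h : WithTop ℚ)) (hπ1 : π 0 = 1)
  {t : ℕ → K} (ht : ∀ j ≤ S.r, v (t j) = (S.xx j : WithTop ℚ))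
include H hπ hπ1

/-- The product of the zeros and poles attached to the rays is an integral power of `q`: the
two points attached to a ray multiply to `t ^ 2`, and the exponents add up by balancing along
the circuit. -/
lemma prod_zz {ϖ : K} (hϖ : ϖ ≠ 0) {D : ℚ} {M : ℕ → ℤ}
    (hM : ∀ j ≤ S.r, (M j : ℚ) = D * S.xx j) (i : Fin n) :
    ∏ p : R × Bool, S.zz π (fun j => ϖ ^ M j) p ^ S.σ p.1 i
      = (ϖ ^ M S.r) ^ (-(2 * S.g (S.r - 1) i)) := by
  have h1 : ∀ ρ, ∏ b : Bool, S.zz π (fun j => ϖ ^ M j) (ρ, b) ^ S.σ ρ i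
      = ϖ ^ (2 * (S.σ ρ i * M (S.ci (S.b ρ)))) := by
    intro ρ
    have hy := S.yy_ne H hπ hπ1 ρ
    rw [Fintype.prod_bool, ← mul_zpow]
    show (ϖ ^ M _ * S.yy π ρ * (ϖ ^ M _ * (S.yy π ρ)⁻¹)) ^ _ = _
    rw [mul_mul_mul_comm, mul_inv_cancel₀ hy, mul_one, ← zpow_add₀ hϖ, ← zpow_mul]
    congr 1; ring
  rw [Fintype.prod_prod_type, Finset.prod_congr rfl fun ρ _ => h1 ρ]
  have h2 : ∀ (s : Finset R) (f : R → ℤ), ∏ ρ ∈ s, ϖ ^ f ρ = ϖ ^ ∑ ρ ∈ s, f ρ := by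
    intro s f
    induction s using Finset.cons_induction with
    | empty => simp
    | cons a s ha ih => rw [Finset.prod_cons, Finset.sum_cons, ih, zpow_add₀ hϖ]
  rw [h2, ← zpow_mul]
  congr 1
  have h3 := S.circ_balance (fun j => (M j : ℚ)) i
  have h4 : ∑ j ∈ Finset.range S.r, (S.g j i : ℚ) * ((M (j + 1) : ℚ) - M j) = 0 := by
    have h5 := S.sum_g_mu i
    have : ∑ j ∈ Finset.range S.r, (S.g j i : ℚ) * ((M (j + 1) : ℚ) - M j)
        = D / 2 * ∑ j ∈ Finset.range S.r, S.mu j * (S.g j i : ℚ) := by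
      rw [Finset.mul_sum]
      refine Finset.sum_congr rfl fun j hj => ?_
      have := Finset.mem_range.1 hj
      rw [hM (j + 1) this, hM j this.le, S.xx_succ]; ring
    rw [this, h5, mul_zero]
  have h0 : (M 0 : ℚ) = 0 := by rw [hM 0 (Nat.zero_le _), xx_zero, mul_zero]
  beta_reduce at h3
  rw [h4, h0] at h3
  rw [← Finset.mul_sum]
  have : ∑ ρ, S.σ ρ i * M (S.ci (S.b ρ)) = - (S.g (S.r - 1) i * M S.r) := by
    have h6 : ((∑ ρ, S.σ ρ i * M (S.ci (S.b ρ)) : ℤ) : ℚ)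
        = ((- (S.g (S.r - 1) i * M S.r) : ℤ) : ℚ) := by
      push_cast; rw [h3]; ring
    exact_mod_cast h6
  rw [this]; ring

/-- The zeros of the `i`-th coordinate of the map. -/
noncomputable def Zp (π : ℚ → K) (t : ℕ → K) (q : K) (C : Fin n → K) (i : Fin n) : Multiset K :=
  (∑ p : R × Bool, Multiset.replicate (S.σ p.1 i).toNat (S.zz π t p))
    + {q * C i, q ^ (2 * S.g (S.r - 1) i - 1)}

/-- The poles of the `i`-th coordinate of the map. The two extra zeros and poles normalize the
product and, through the free parameter `C i`, the constant factor. -/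
noncomputable def Zm (π : ℚ → K) (t : ℕ → K) (C : Fin n → K) (i : Fin n) : Multiset K :=
  (∑ p : R × Bool, Multiset.replicate (-S.σ p.1 i).toNat (S.zz π t p)) + {C i, 1}

omit H hπ hπ1 in
lemma card_Zp (t : ℕ → K) (q : K) (C : Fin n → K) (i : Fin n) :
    Multiset.card (S.Zp π t q C i) = Multiset.card (S.Zm π t C i) := by
  rw [Zp, Zm, Multiset.card_add, Multiset.card_add, Multiset.card_sum, Multiset.card_sum]
  congr 1
  simp only [Multiset.card_replicate]
  have h : ∑ p : R × Bool, S.σ p.1 i = 0 := by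
    rw [Fintype.sum_prod_type]
    simp only [Fintype.sum_bool]
    rw [Finset.sum_add_distrib, S.sum_σ, add_zero]
  have h2 : ∀ p : R × Bool, S.σ p.1 i = ((S.σ p.1 i).toNat : ℤ) - ((-S.σ p.1 i).toNat : ℤ) :=
    fun p => by omega
  rw [Finset.sum_congr rfl fun p _ => h2 p, Finset.sum_sub_distrib] at h
  zify
  linarith

omit H hπ hπ1 in
lemma exists_mem_Z (t : ℕ → K) (q : K) (C : Fin n → K) (p : R × Bool) :
    ∃ i, S.zz π t p ∈ S.Zp π t q C i ∨ S.zz π t p ∈ S.Zm π t C i := by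
  obtain ⟨i, hi⟩ := Function.ne_iff.1 (S.σ_ne p.1)
  refine ⟨i, ?_⟩
  rw [Zp, Zm, Multiset.mem_add, Multiset.mem_add, Multiset.mem_sum, Multiset.mem_sum]
  rcases lt_or_gt_of_ne hi with h | h
  · refine Or.inr (Or.inl ⟨p, Finset.mem_univ _, Multiset.mem_replicate.2 ⟨?_, rfl⟩⟩)
    simp only [Pi.zero_apply] at h; omega
  · refine Or.inl (Or.inl ⟨p, Finset.mem_univ _, Multiset.mem_replicate.2 ⟨?_, rfl⟩⟩)
    simp only [Pi.zero_apply] at h; omega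

include ht in
lemma Z_ne {q : K} (hq : q ≠ 0) {C : Fin n → K} (hC : ∀ i, C i ≠ 0) (i : Fin n) :
    (∀ z ∈ S.Zp π t q C i, z ≠ 0) ∧ ∀ z ∈ S.Zm π t C i, z ≠ 0 := by
  have key : ∀ (a : R × Bool → ℕ), ∀ z ∈ ∑ p : R × Bool,
      Multiset.replicate (a p) (S.zz π t p), z ≠ 0 := by
    intro a z hz
    obtain ⟨p, -, hp⟩ := Multiset.mem_sum.1 hz
    rw [Multiset.eq_of_mem_replicate hp]
    exact S.zz_ne H hπ hπ1 ht p
  constructor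
  · intro z hz
    rcases Multiset.mem_add.1 hz with h | h
    · exact key _ z h
    · simp only [Multiset.insert_eq_cons, Multiset.mem_cons, Multiset.mem_singleton] at h
      rcases h with rfl | rfl
      · exact mul_ne_zero hq (hC i)
      · exact zpow_ne_zero _ hq
  · intro z hz
    rcases Multiset.mem_add.1 hz with h | h
    · exact key _ z h
    · simp only [Multiset.insert_eq_cons, Multiset.mem_cons, Multiset.mem_singleton] at h
      rcases h with rfl | rfl
      · exact hC i
      · exact one_ne_zero

include ht in
/-- The valuation of a coordinate of the map on the annulus `0 ≤ v(u) < v(q)`. -/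
lemma val_phi {q : K} (hq : v q = (S.xx S.r : WithTop ℚ)) {C : Fin n → K} (hC : ∀ i, C i ≠ 0)
    {κ : ℤ → ℚ} (hκ : ∀ m w, w ≠ 0 → NotPow q w →
      val v (theta v q (w * q ^ (-m))) = val v (theta v q w) + m * val v w + κ m)
    (hCv : ∀ i, val v (C i) = κ (2 * S.g (S.r - 1) i - 1) - S.xx S.r - S.pos (S.c 0) i
      + 2 * S.xx S.r * S.g (S.r - 1) i)
    {u : K} (hu : TateDom q (S.Zp π t q C) (S.Zm π t C) u) (h0 : 0 ≤ val v u)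
    (h1 : val v u < S.xx S.r) (i : Fin n) :
    v (phiVal (fun z u => theta v q (u / z)) (S.Zp π t q C i) (S.Zm π t C i) u)
      = (S.F v π t u i : WithTop ℚ) := by
  have hu0 := hu.1
  have hq1 := H.ne_zero_of_eq hq
  have hqv := val_of_eq hq
  have hL : 0 < S.xx S.r := by rw [← S.xx_zero]; exact S.xx_strictMono S.r_pos
  have hq0 : 0 < v q := by rw [hq]; exact WithTop.coe_pos.2 hL
  have hZ := S.Z_ne H hπ hπ1 ht hq1 hC
  have hnp : ∀ i, ∀ z ∈ S.Zp π t q C i, NotPow q (u / z) := fun i z hz =>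
    notPow_of ((hZ i).1 z hz) fun j => (hu.2 j i).1 z hz
  have hnm : ∀ i, ∀ z ∈ S.Zm π t C i, NotPow q (u / z) := fun i z hz =>
    notPow_of ((hZ i).2 z hz) fun j => (hu.2 j i).2 z hz
  have hzz := S.zz_ne H hπ hπ1 ht
  have hnz : ∀ p, NotPow q (u / S.zz π t p) := by
    intro p
    obtain ⟨i, h | h⟩ := S.exists_mem_Z (π := π) t q C p
    · exact hnp i _ h
    · exact hnm i _ h
  have hth : ∀ p, theta v q (u / S.zz π t p) ≠ 0 := fun p =>
    theta_ne_zero H hq1 hq0 (div_ne_zero hu0 (hzz p)) (hnz p)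
  have hne : phiVal (fun z u => theta v q (u / z)) (S.Zp π t q C i) (S.Zm π t C i) u ≠ 0 :=
    div_ne_zero (prod_theta_ne_zero H hq1 hq0 hu0 (hZ i).1 (hnp i))
      (prod_theta_ne_zero H hq1 hq0 hu0 (hZ i).2 (hnm i))
  rw [H.coe_val hne]
  congr 1
  -- the four auxiliary factors
  set m : ℤ := 2 * S.g (S.r - 1) i - 1 with hm
  have n1 : NotPow q (u / (q * C i)) := hnp i _ (by simp [Zp])
  have n2 : NotPow q u := by simpa using hnm i 1 (by simp [Zm])
  have e1 : u / C i = q * (u / (q * C i)) := by field_simp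
  have e2 : u / q ^ m = u * q ^ (-m) := by rw [zpow_neg, div_eq_mul_inv]
  have d1 : u / (q * C i) ≠ 0 := div_ne_zero hu0 (mul_ne_zero hq1 (hC i))
  have f1 : theta v q (u / (q * C i)) ≠ 0 := theta_ne_zero H hq1 hq0 d1 n1
  have f2 : theta v q u ≠ 0 := theta_ne_zero H hq1 hq0 hu0 n2
  have f3 : theta v q (u * q ^ (-m)) ≠ 0 :=
    theta_ne_zero H hq1 hq0 (mul_ne_zero hu0 (zpow_ne_zero _ hq1)) (n2.mul_zpow hq1 _)
  have v1 : val v (theta v q (u / C i)) = val v (theta v q (u / (q * C i)))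
      - (val v u - (S.xx S.r + val v (C i))) := by
    rw [e1, theta_mul_left H hq1 hq0 d1 n1, H.val_mul (neg_ne_zero.2 (one_div_ne_zero d1)) f1, val,
      H.v_neg, ← val, one_div, H.val_inv d1, H.val_div hu0 (mul_ne_zero hq1 (hC i)),
      H.val_mul hq1 (hC i), hqv]
    ring
  have f4 : theta v q (u / C i) ≠ 0 :=
    theta_ne_zero H hq1 hq0 (div_ne_zero hu0 (hC i)) (hnm i _ (by simp [Zm]))
  have vprod : ∀ s : Finset (R × Bool),
      ∏ p ∈ s, theta v q (u / S.zz π t p) ^ S.σ p.1 i ≠ 0 ∧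
      val v (∏ p ∈ s, theta v q (u / S.zz π t p) ^ S.σ p.1 i)
        = ∑ p ∈ s, (S.σ p.1 i : ℚ) * val v (1 - u / S.zz π t p) := by
    intro s
    induction s using Finset.cons_induction with
    | empty => simp [H.val_one]
    | cons p s hp ih =>
      have h2 := zpow_ne_zero (S.σ p.1 i) (hth p)
      rw [Finset.prod_cons, Finset.sum_cons]
      refine ⟨mul_ne_zero h2 ih.1, ?_⟩
      rw [H.val_mul h2 ih.1, ih.2, H.val_zpow (hth p)]
      congr 2
      rw [val, v_theta H hq1 hq0 (div_ne_zero hu0 (hzz p)) (hnz p), ← val]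
      rw [H.val_div hu0 (hzz p), S.val_zz H hπ hπ1 ht, hqv]
      have a1 := S.xx_strictMono (S.ci_lt (S.b p.1))
      have a2 := S.xx_strictMono.monotone (Nat.zero_le (S.ci (S.b p.1)))
      rw [S.xx_zero] at a2
      rw [abs_lt]; constructor <;> linarith
  have hform := prod_div_prod (fun p : R × Bool => S.σ p.1 i) (S.zz π t)
    (fun z => theta v q (u / z)) hth {q * C i, q ^ m} {C i, 1}
  simp only [Multiset.insert_eq_cons, Multiset.map_cons, Multiset.map_singleton,
    Multiset.prod_cons, Multiset.prod_singleton, div_one] at hform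
  rw [e2] at hform
  rw [phiVal]
  simp only [Zp, Zm, Multiset.insert_eq_cons, ← hm]
  rw [hform, H.val_mul (vprod _).1 (div_ne_zero (mul_ne_zero f1 f3) (mul_ne_zero f4 f2)),
    (vprod _).2, H.val_div (mul_ne_zero f1 f3) (mul_ne_zero f4 f2), H.val_mul f1 f3,
    H.val_mul f4 f2, v1, hκ m u hu0 n2, F, hCv i]
  rw [hm]; push_cast; ring

omit hπ hπ1 in
/-- The lifting theorem for a skeleton. -/
theorem lift [Finite W] : ∃ (q : K) (Zp Zm : Fin n → Multiset K) (Θ : K → K → K),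
      q ≠ 0 ∧ 0 < v q ∧
      (∀ i, ∀ z ∈ Zp i, z ≠ (0 : K)) ∧ (∀ i, ∀ z ∈ Zm i, z ≠ (0 : K)) ∧
      (∀ i, Multiset.card (Zp i) = Multiset.card (Zm i)) ∧
      (∀ i, (Zp i).prod = (Zm i).prod) ∧
      (∀ z u : K, z ≠ 0 → u ≠ 0 → (∀ j : ℤ, u ≠ q ^ j * z) →
        Θ z u ≠ 0 ∧
        VTendsto v
          (fun m => (∏ j ∈ Finset.range m, (1 - q ^ j * u / z)) *
            ∏ j ∈ Finset.range m, (1 - q ^ (j + 1) * z / u))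
          (Θ z u)) ∧
      (∀ u : K, TateDom q Zp Zm u →
        ∀ i, phiVal Θ (Zp i) (Zm i) (q * u) = phiVal Θ (Zp i) (Zm i) u) ∧
      ((fun u : K => fun i => v (phiVal Θ (Zp i) (Zm i) u)) '' {u : K | TateDom q Zp Zm u}
        = (fun p : Fin n → ℚ => fun i => ((p i : ℚ) : WithTop ℚ)) '' S.Img) := by
  obtain ⟨π, hπ, hπ1⟩ : ∃ π : ℚ → K, (∀ h : ℚ, v (π h) = (h : WithTop ℚ)) ∧ π 0 = 1 := by
    choose π hπ using H.surj
    refine ⟨Function.update π 0 1, fun h => ?_, by simp⟩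
    by_cases h0 : h = 0
    · subst h0; simp [H.v_one]
    · rw [Function.update_of_ne h0, hπ]
  obtain ⟨D, hD, hM⟩ := exists_denom S.xx S.r
  choose! M hM using hM
  have hϖ := hπ (1 / D)
  have hϖ0 := H.ne_zero_of_eq hϖ
  set t : ℕ → K := fun j => π (1 / D) ^ M j with ht_def
  have ht : ∀ j ≤ S.r, v (t j) = (S.xx j : WithTop ℚ) := by
    intro j hj
    rw [ht_def, H.coe_val (zpow_ne_zero _ hϖ0), H.val_zpow hϖ0, val_of_eq hϖ, hM j hj]
    congr 1
    have : (D : ℚ) ≠ 0 := by positivity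
    field_simp
  have hq := ht S.r le_rfl
  have hq1 := H.ne_zero_of_eq hq
  have hqv := val_of_eq hq
  have hL : 0 < S.xx S.r := by rw [← S.xx_zero]; exact S.xx_strictMono S.r_pos
  have hq0 : 0 < v (t S.r) := by rw [hq]; exact WithTop.coe_pos.2 hL
  choose κ hκ using val_theta_zpow H hq1 hq0
  choose C hCv using fun i : Fin n => H.surj (κ (2 * S.g (S.r - 1) i - 1) - S.xx S.r
    - S.pos (S.c 0) i + 2 * S.xx S.r * S.g (S.r - 1) i)
  have hC : ∀ i, C i ≠ 0 := fun i => H.ne_zero_of_eq (hCv i)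
  have hZ := S.Z_ne H hπ hπ1 ht hq1 hC
  have hzz := S.zz_ne H hπ hπ1 ht
  have hcard := S.card_Zp (π := π) t (t S.r) C
  have hprod : ∀ i, (S.Zp π t (t S.r) C i).prod = (S.Zm π t C i).prod := by
    intro i
    have hform := prod_div_prod (fun p : R × Bool => S.σ p.1 i) (S.zz π t)
      id hzz {t S.r * C i, t S.r ^ (2 * S.g (S.r - 1) i - 1)} {C i, 1}
    simp only [id_eq, Multiset.map_id'] at hform
    rw [S.prod_zz H hπ hπ1 hϖ0 hM i] at hform
    have hne : (S.Zm π t C i).prod ≠ 0 := by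
      rw [Ne, Multiset.prod_eq_zero_iff]
      exact fun h => (hZ i).2 0 h rfl
    rw [← div_eq_one_iff_eq hne, Zp, Zm, hform]
    have hCi := hC i
    simp only [Multiset.insert_eq_cons, Multiset.prod_cons, Multiset.prod_singleton, mul_one]
    rw [show t S.r * C i * t S.r ^ (2 * S.g (S.r - 1) i - 1) / C i
      = t S.r ^ (1 + (2 * S.g (S.r - 1) i - 1)) by
        rw [zpow_add₀ hq1, zpow_one]; field_simp]
    show t S.r ^ _ * _ = _
    rw [← zpow_add₀ hq1]
    convert zpow_zero _ using 2; ring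
  have hper : ∀ u : K, TateDom (t S.r) (S.Zp π t (t S.r) C) (S.Zm π t C) u →
      ∀ i, phiVal (fun z u => theta v (t S.r) (u / z)) (S.Zp π t (t S.r) C i) (S.Zm π t C i)
          (t S.r * u)
        = phiVal (fun z u => theta v (t S.r) (u / z)) (S.Zp π t (t S.r) C i) (S.Zm π t C i) u :=
    fun u hu i => phi_mul H hq1 hq0 (hcard i) (hprod i) hu.1 (hZ i).1
      (fun z hz => notPow_of ((hZ i).1 z hz) fun j => (hu.2 j i).1 z hz) (hZ i).2
      (fun z hz => notPow_of ((hZ i).2 z hz) fun j => (hu.2 j i).2 z hz)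
  have hphi : ∀ u, TateDom (t S.r) (S.Zp π t (t S.r) C) (S.Zm π t C) u → 0 ≤ val v u →
      val v u < S.xx S.r → ∀ i,
      v (phiVal (fun z u => theta v (t S.r) (u / z)) (S.Zp π t (t S.r) C i) (S.Zm π t C i) u)
        = (S.F v π t u i : WithTop ℚ) := fun u hu h0 h1 i =>
    S.val_phi H hπ hπ1 ht hq hC hκ (fun i => val_of_eq (hCv i)) hu h0 h1 i
  refine ⟨t S.r, S.Zp π t (t S.r) C, S.Zm π t C, fun z u => theta v (t S.r) (u / z), hq1, hq0,
    fun i => (hZ i).1, fun i => (hZ i).2, hcard, hprod, ?_, hper, ?_⟩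
  · intro z u hz hu hj
    have hn := notPow_of hz hj
    have h := theta_spec H hq1 hq0 (div_ne_zero hu hz) hn
    refine ⟨theta_ne_zero H hq1 hq0 (div_ne_zero hu hz) hn, ?_⟩
    convert h using 2 with m
    rw [thetaPart]
    congr 1
    · exact Finset.prod_congr rfl fun j _ => by rw [mul_div_assoc]
    · exact Finset.prod_congr rfl fun j _ => by rw [div_div_eq_mul_div]
  ext y
  constructor
  · rintro ⟨u, hu, rfl⟩
    -- move `u` into the fundamental annulus
    have hu' := tateDom_zpow hq1 hu (-⌊val v u / S.xx S.r⌋)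
    set u' := t S.r ^ (-⌊val v u / S.xx S.r⌋) * u with hu'_def
    have hval : val v u' = val v u - ⌊val v u / S.xx S.r⌋ * S.xx S.r := by
      rw [hu'_def, H.val_mul (zpow_ne_zero _ hq1) hu.1, H.val_zpow hq1, hqv]
      push_cast; ring
    have h0 : 0 ≤ val v u' := by
      have := Int.floor_le (val v u / S.xx S.r)
      rw [le_div_iff₀ hL] at this
      linarith
    have h1 : val v u' < S.xx S.r := by
      have := Int.lt_floor_add_one (val v u / S.xx S.r)
      rw [div_lt_iff₀ hL] at this
      linarith
    refine ⟨S.F v π t u', S.F_mem H hπ hπ1 ht hu'.1 h0 h1 ?_, ?_⟩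
    · rintro p hp
      obtain ⟨i, h | h⟩ := S.exists_mem_Z (π := π) t (t S.r) C p
      · exact (hu'.2 0 i).1 _ h (by rw [zpow_zero, one_mul, hp])
      · exact (hu'.2 0 i).2 _ h (by rw [zpow_zero, one_mul, hp])
    · funext i
      beta_reduce
      rw [← hphi u' hu' h0 h1 i, hu'_def,
        periodic_zpow hq1 (fun w hw => hper w hw i) hu]
  · rintro ⟨x, hx, rfl⟩
    -- representatives in the fundamental annulus of all zeros and poles are avoided
    let rep : K → K := fun z => t S.r ^ (-⌊val v z / S.xx S.r⌋) * z
    obtain ⟨u, hu0, h0, h1, hY, -, hF⟩ := S.exists_pt H hπ hπ1 ht hx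
      (Y := ⋃ i, rep '' {z | z ∈ S.Zp π t (t S.r) C i + S.Zm π t C i})
      (Set.finite_iUnion fun i => Set.Finite.image _ (Multiset.finite_toSet _))
    have hrep : ∀ (j : ℤ) (z : K), z ≠ 0 → u = t S.r ^ j * z → u = rep z := by
      intro j z hz e
      have hvz : val v u = j * S.xx S.r + val v z := by
        rw [e, H.val_mul (zpow_ne_zero _ hq1) hz, H.val_zpow hq1, hqv]
      have : ⌊val v z / S.xx S.r⌋ = -j := by
        rw [Int.floor_eq_iff, le_div_iff₀ hL, div_lt_iff₀ hL]
        push_cast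
        constructor <;> linarith
      simp only [rep]
      rw [this, neg_neg, e]
    have hdom : TateDom (t S.r) (S.Zp π t (t S.r) C) (S.Zm π t C) u := by
      refine ⟨hu0, fun j i => ⟨fun z hz e => hY ?_, fun z hz e => hY ?_⟩⟩
      · exact Set.mem_iUnion.2 ⟨i, z, Multiset.mem_add.2 (Or.inl hz),
          (hrep j z ((hZ i).1 z hz) e).symm⟩
      · exact Set.mem_iUnion.2 ⟨i, z, Multiset.mem_add.2 (Or.inr hz),
          (hrep j z ((hZ i).2 z hz) e).symm⟩
    refine ⟨u, hdom, ?_⟩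
    funext i
    beta_reduce
    rw [hphi u hdom h0 h1 i, hF]

end Field

end Skel

end TropLift

/-! ### Unicyclic graphs as functional graphs -/

namespace TropLift

/-- A connected graph with one circuit, presented as a functional graph: the edges are the pairs
`(w, nxt w)`, where `nxt` moves one step towards the circuit (`rk` is the distance to it) and
rotates the circuit. The edge `(w, nxt w)` has slope `d w` and length `lam w`, so that contracted
edges may have positive length. The zero tension condition is stated in the weak form `weak`,
that is, tested against functions on the vertices. -/
structure Uni (n : ℕ) (W R : Type) [Fintype W] [Fintype R] where
  pos : W → Fin n → ℚ
  nxt : W → W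
  rk : W → ℕ
  lam : W → ℚ
  d : W → Fin n → ℤ
  b : R → W
  σ : R → Fin n → ℤ
  r : ℕ
  c : ℕ → W
  kk : W → ℕ
  rk_nxt : ∀ w, rk w ≠ 0 → rk (nxt w) + 1 = rk w
  lam_pos : ∀ w, 0 < lam w
  σ_ne : ∀ ρ, σ ρ ≠ 0
  pos_nxt : ∀ w i, pos (nxt w) i = pos w i + lam w * (d w i : ℚ)
  weak : ∀ (F : W → ℚ) (i : Fin n),
    ∑ w, (F w - F (nxt w)) * (d w i : ℚ) + ∑ ρ, F (b ρ) * (σ ρ i : ℚ) = 0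
  r_pos : 0 < r
  c_r : c r = c 0
  rk_c : ∀ j, rk (c j) = 0
  kk_c : ∀ j < r, kk (c j) = j
  kk_lt : ∀ w, kk w < r
  c_kk : ∀ w, rk w = 0 → c (kk w) = w
  nxt_c : ∀ j < r, nxt (c j) = c (j + 1)

namespace Uni

variable {n : ℕ} {W R : Type} [Fintype W] [Fintype R] (U : Uni n W R)

/-- One step towards the circuit; the circuit vertices are fixed. -/
def par (w : W) : W := if U.rk w = 0 then w else U.nxt w

lemma par_root {w : W} (h : U.rk w = 0) : U.par w = w := if_pos h

lemma par_of_ne {w : W} (h : U.rk w ≠ 0) : U.par w = U.nxt w := if_neg h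

lemma rk_nxt_root {w : W} (h : U.rk w = 0) : U.rk (U.nxt w) = 0 := by
  rw [← U.c_kk w h, U.nxt_c _ (U.kk_lt w)]
  exact U.rk_c _

/-- The trees hanging off the circuit, with the rays as additional leaves. -/
noncomputable def forest : Forest (W ⊕ R) where
  par := Sum.elim (fun w => Sum.inl (U.par w)) fun ρ => Sum.inl (U.b ρ)
  rk := Sum.elim U.rk fun ρ => U.rk (U.b ρ) + 1
  lam := Sum.elim U.lam fun _ => 1
  idx x := Fintype.equivFin (W ⊕ R) x + 2
  par_root := by
    rintro (w | ρ) h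
    · exact congrArg Sum.inl (U.par_root h)
    · exact absurd h (Nat.succ_ne_zero _)
  rk_par := by
    rintro (w | ρ) h
    · show U.rk (U.par w) + 1 = U.rk w
      rw [U.par_of_ne h, U.rk_nxt w h]
    · rfl
  lam_pos := by
    rintro (w | ρ)
    · exact U.lam_pos w
    · exact one_pos
  idx_inj := by
    intro a b h
    exact (Fintype.equivFin (W ⊕ R)).injective (Fin.ext (Nat.add_right_cancel h))
  idx_two := fun x => Nat.le_add_left _ _

/-- The position on the circuit at which the tree containing `w` is attached. -/
def ci (w : W) : ℕ := U.kk (U.par^[U.rk w] w)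

lemma ci_root {w : W} (h : U.rk w = 0) : U.ci w = U.kk w := by rw [ci, h]; rfl

lemma ci_par (w : W) : U.ci (U.par w) = U.ci w := by
  by_cases h : U.rk w = 0
  · rw [U.par_root h]
  · have := U.rk_nxt w h
    rw [← U.par_of_ne h] at this
    rw [ci, ci, ← this, Function.iterate_succ_apply]

lemma anc_rk {p w : W} (h : U.forest.Anc (Sum.inl p) (Sum.inl w)) : U.rk p ≤ U.rk w := by
  obtain ⟨j, hj⟩ := h
  induction j generalizing w with
  | zero => obtain rfl : w = p := Sum.inl_injective hj; rfl
  | succ j ih =>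
    rw [Function.iterate_succ_apply] at hj
    have := ih (w := U.par w) hj
    by_cases h : U.rk w = 0
    · rwa [U.par_root h] at this
    · rw [U.par_of_ne h] at this
      have := U.rk_nxt w h
      omega

lemma balance (w : W) (hw : U.rk w ≠ 0) (i : Fin n) :
    ∑ ρ, (if U.forest.Anc (Sum.inl w) (Sum.inr ρ) then (U.σ ρ i : ℚ) else 0)
      = ((-U.d w i : ℤ) : ℚ) := by
  have h := U.weak (fun x => if U.forest.Anc (Sum.inl w) (Sum.inl x) then 1 else 0) i
  beta_reduce at h
  -- the indicator function of a subtree jumps only along the edge below its root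
  rw [Finset.sum_eq_single w] at h
  · rw [if_pos (U.forest.anc_refl _), if_neg, sub_zero, one_mul] at h
    · have e : ∀ ρ, (if U.forest.Anc (Sum.inl w) (Sum.inr ρ) then (U.σ ρ i : ℚ) else 0)
          = (if U.forest.Anc (Sum.inl w) (Sum.inl (U.b ρ)) then (1 : ℚ) else 0) * U.σ ρ i := by
        intro ρ
        have : U.forest.Anc (Sum.inl w) (Sum.inr ρ) ↔ U.forest.Anc (Sum.inl w) (Sum.inl (U.b ρ)) := by
          constructor
          · intro h
            rcases U.forest.anc_cases h with h | h
            · cases h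
            · exact h
          · intro h
            exact U.forest.anc_of_par (x := Sum.inr ρ) h
        simp only [this, ite_mul, one_mul, zero_mul]
      rw [Finset.sum_congr rfl fun ρ _ => e ρ]
      push_cast
      linarith
    · intro h'
      have := U.anc_rk h'
      have := U.rk_nxt w hw
      omega
  · intro x _ hx
    have : U.forest.Anc (Sum.inl w) (Sum.inl x) ↔ U.forest.Anc (Sum.inl w) (Sum.inl (U.nxt x)) := by
      by_cases hr : U.rk x = 0
      · constructor
        · intro h; have := U.anc_rk h; omega
        · intro h; have := U.anc_rk h; have := U.rk_nxt_root hr; omega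
      · have hp : U.forest.par (Sum.inl x) = Sum.inl (U.nxt x) :=
          congrArg Sum.inl (U.par_of_ne hr)
        rw [← hp]
        constructor
        · intro h
          rcases U.forest.anc_cases h with h | h
          · exact absurd (Sum.inl_injective h) hx
          · exact h
        · exact U.forest.anc_of_par
    simp only [this, sub_self, zero_mul]
  · simp

lemma circ_balance (F : ℕ → ℚ) (i : Fin n) : ∑ ρ, (U.σ ρ i : ℚ) * F (U.ci (U.b ρ)) =
    (∑ j ∈ Finset.range U.r, (U.d (U.c j) i : ℚ) * (F (j + 1) - F j))
      + U.d (U.c (U.r - 1)) i * (F 0 - F U.r) := by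
  have h := U.weak (fun w => F (U.ci w)) i
  beta_reduce at h
  have h1 : ∑ w, (F (U.ci w) - F (U.ci (U.nxt w))) * (U.d w i : ℚ)
      = ∑ j ∈ Finset.range U.r, (F (U.ci (U.c j)) - F (U.ci (U.nxt (U.c j)))) * (U.d (U.c j) i : ℚ) := by
    rw [← Finset.sum_subset (Finset.subset_univ ((Finset.range U.r).image U.c)),
      Finset.sum_image]
    · intro a ha b hb hab
      have := U.kk_c a (by simpa using ha)
      rw [hab, U.kk_c b (by simpa using hb)] at this
      exact this.symm
    · intro w _ hw
      have hr : U.rk w ≠ 0 := by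
        intro hr
        exact hw (Finset.mem_image.2 ⟨U.kk w, Finset.mem_range.2 (U.kk_lt w), U.c_kk w hr⟩)
      rw [← U.par_of_ne hr, U.ci_par, sub_self, zero_mul]
  have hci : ∀ j < U.r, U.ci (U.c j) = j := fun j hj => by
    rw [U.ci_root (U.rk_c j), U.kk_c j hj]
  obtain ⟨m, hm⟩ := Nat.exists_eq_succ_of_ne_zero U.r_pos.ne'
  have h2 : ∑ j ∈ Finset.range m, (F (U.ci (U.c j)) - F (U.ci (U.nxt (U.c j)))) * (U.d (U.c j) i : ℚ)
      = - ∑ j ∈ Finset.range m, (U.d (U.c j) i : ℚ) * (F (j + 1) - F j) := by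
    rw [← Finset.sum_neg_distrib]
    refine Finset.sum_congr rfl fun j hj => ?_
    have := Finset.mem_range.1 hj
    rw [U.nxt_c j (by omega), hci j (by omega), hci (j + 1) (by omega)]; ring
  have h3 : ∑ ρ, (U.σ ρ i : ℚ) * F (U.ci (U.b ρ)) = ∑ ρ, F (U.ci (U.b ρ)) * (U.σ ρ i : ℚ) :=
    Finset.sum_congr rfl fun ρ _ => mul_comm _ _
  have h4 : U.c (m + 1) = U.c 0 := by rw [← Nat.succ_eq_add_one, ← hm, U.c_r]
  rw [h1, hm, Finset.sum_range_succ, h2, U.nxt_c m (by omega), hci m (by omega), h4,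
    hci 0 (by omega)] at h
  rw [h3, hm, Finset.sum_range_succ, Nat.succ_sub_one]
  rw [Nat.succ_eq_add_one]
  linarith

/-- The skeleton of a unicyclic graph. -/
noncomputable def toSkel : Skel n W R where
  T := U.forest
  pos := U.pos
  parW := U.par
  b := U.b
  par_inl _ := rfl
  par_inr _ := rfl
  rk_inr _ := Nat.succ_ne_zero _
  s w i := -U.d w i
  σ := U.σ
  σ_ne := U.σ_ne
  pos_edge w hw i := by
    show _ = U.pos (U.par w) i + U.lam w * _
    rw [U.par_of_ne hw, U.pos_nxt]; push_cast; ring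
  balance := U.balance
  r := U.r
  r_pos := U.r_pos
  c := U.c
  c_r := U.c_r
  rk_c := U.rk_c
  ci := U.ci
  ci_lt _ := U.kk_lt _
  ci_c j hj := by rw [U.ci_root (U.rk_c j), U.kk_c j hj]
  c_ci w hw := by rw [U.ci_root hw, U.c_kk w hw]
  ci_par := U.ci_par
  mu j := U.lam (U.c j)
  mu_pos _ := U.lam_pos _
  g j := U.d (U.c j)
  pos_circ j hj i := by rw [← U.nxt_c j hj, U.pos_nxt]
  circ_balance := U.circ_balance

/-- The image of the curve, in terms of closed edges and closed rays. -/
lemma img_toSkel : U.toSkel.Img = {x | (∃ w, ∃ s : ℚ, 0 ≤ s ∧ s ≤ U.lam w ∧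
      x = fun i => U.pos w i + s * (U.d w i : ℚ)) ∨
    (∃ ρ, ∃ s : ℚ, 0 ≤ s ∧ x = fun i => U.pos (U.b ρ) i + s * (U.σ ρ i : ℚ))} := by
  ext x
  constructor
  · rintro (⟨w, rfl⟩ | ⟨w, d, hw, hd, hd', rfl⟩ | ⟨ρ, d, hd, rfl⟩ | ⟨j, d, hj, hd, hd', rfl⟩)
    · exact Or.inl ⟨w, 0, le_rfl, (U.lam_pos w).le, funext fun i => by simp [toSkel]⟩
    · replace hd' : d < U.lam w := hd'
      refine Or.inl ⟨w, U.lam w - d, by linarith, by linarith, funext fun i => ?_⟩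
      show U.pos (U.par w) i + d * ((-U.d w i : ℤ) : ℚ) = _
      rw [U.par_of_ne hw, U.pos_nxt]; push_cast; ring
    · exact Or.inr ⟨ρ, d, hd.le, rfl⟩
    · exact Or.inl ⟨U.c j, d, hd.le, le_of_lt hd', rfl⟩
  · rintro (⟨w, s, h0, h1, rfl⟩ | ⟨ρ, s, h0, rfl⟩)
    · rcases h0.eq_or_lt with rfl | h0
      · exact Or.inl ⟨w, funext fun i => by simp [toSkel]⟩
      rcases h1.eq_or_lt with rfl | h1
      · exact Or.inl ⟨U.nxt w, funext fun i => (U.pos_nxt w i).symm⟩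
      by_cases hw : U.rk w = 0
      · refine Or.inr (Or.inr (Or.inr ⟨U.kk w, s, U.kk_lt w, h0, ?_, ?_⟩))
        · show s < U.lam (U.c (U.kk w))
          rwa [U.c_kk w hw]
        · show _ = fun i => U.pos (U.c (U.kk w)) i + s * (U.d (U.c (U.kk w)) i : ℚ)
          rw [U.c_kk w hw]
      · refine Or.inr (Or.inl ⟨w, U.lam w - s, hw, by linarith, ?_, funext fun i => ?_⟩)
        · show U.lam w - s < U.lam w
          linarith
        · show _ = U.pos (U.par w) i + (U.lam w - s) * ((-U.d w i : ℤ) : ℚ)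
          rw [U.par_of_ne hw, U.pos_nxt]; push_cast; ring
    · rcases h0.eq_or_lt with rfl | h0
      · exact Or.inl ⟨U.b ρ, funext fun i => by simp [toSkel]⟩
      · exact Or.inr (Or.inr (Or.inl ⟨ρ, s, h0, rfl⟩))

end Uni

end TropLift

/-! ### Zero tension curves of genus one are unicyclic -/

namespace TropLift

variable {n : ℕ} (C : ZTC n)

/-- The bounded edge `e` joins the vertices `u` and `w`. -/
def Joins (e : Fin C.EB) (u w : Fin C.V) : Prop :=
  (C.bsrc e = u ∧ C.bdst e = w) ∨ (C.bsrc e = w ∧ C.bdst e = u)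

lemma Joins.eq_or {C : ZTC n} {e : Fin C.EB} {u w u' w' : Fin C.V} (h : Joins C e u w)
    (h' : Joins C e u' w') : (u = u' ∧ w = w') ∨ (u = w' ∧ w = u') := by
  rcases h with ⟨rfl, rfl⟩ | ⟨rfl, rfl⟩ <;> rcases h' with ⟨rfl, rfl⟩ | ⟨rfl, rfl⟩ <;> simp

/-- There is a walk of `k` edges from `w` to a vertex of `S`. -/
def Reach (S : Set (Fin C.V)) : ℕ → Fin C.V → Prop
  | 0, w => w ∈ S
  | k + 1, w => ∃ w', C.Adj w w' ∧ Reach S k w'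

lemma exists_reach (hconn : C.Connected) {S : Set (Fin C.V)} {s : Fin C.V} (hs : s ∈ S)
    (w : Fin C.V) : ∃ k, Reach C S k w := by
  induction hconn w s using Relation.ReflTransGen.head_induction_on with
  | refl => exact ⟨0, hs⟩
  | head h _ ih =>
    obtain ⟨k, hk⟩ := ih
    exact ⟨k + 1, _, h, hk⟩

/-- The distance, in number of edges, to a nonempty set of vertices of a connected graph, together
with a choice of first edges of shortest walks. -/
lemma exists_rank (e₀ : Fin C.EB) (hconn : C.Connected) {S : Set (Fin C.V)} {s : Fin C.V} (hs : s ∈ S) :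
    ∃ (rk : Fin C.V → ℕ) (par : Fin C.V → Fin C.V) (pe : Fin C.V → Fin C.EB),
      (∀ w, rk w = 0 ↔ w ∈ S) ∧
      ∀ w, rk w ≠ 0 → rk (par w) + 1 = rk w ∧ Joins C (pe w) w (par w) := by
  have hr := exists_reach C hconn hs
  have key : ∀ w, ∃ p : Fin C.V × Fin C.EB, Nat.find (hr w) ≠ 0 →
      Nat.find (hr p.1) + 1 = Nat.find (hr w) ∧ Joins C p.2 w p.1 := by
    intro w
    by_cases h0 : Nat.find (hr w) = 0
    · obtain ⟨k, hk⟩ := hr w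
      cases k with
      | zero => exact ⟨(w, e₀), fun h => absurd h0 h⟩
      | succ k =>
        obtain ⟨w', ⟨e, he⟩, -⟩ := hk
        exact ⟨(w', e), fun h => absurd h0 h⟩
    · obtain ⟨k, hk⟩ := Nat.exists_eq_succ_of_ne_zero h0
      have h := Nat.find_spec (hr w)
      rw [hk] at h
      obtain ⟨w', ⟨e, he⟩, h'⟩ := h
      refine ⟨(w', e), fun _ => ⟨le_antisymm ?_ ?_, he⟩⟩
      · rw [hk]
        exact Nat.succ_le_succ (Nat.find_min' _ h')
      · exact Nat.find_min' (hr w) ⟨w', ⟨e, he⟩, Nat.find_spec (hr w')⟩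
  choose p hp using key
  refine ⟨fun w => Nat.find (hr w), fun w => (p w).1, fun w => (p w).2, fun w => ?_, hp⟩
  exact Nat.find_eq_zero (hr w)

/-- In a connected graph with as many edges as vertices and with a given circuit, the edges
correspond to the vertices: to a vertex off the circuit belongs the first edge of a shortest walk to
the circuit, to a vertex on the circuit the next edge of the circuit. -/
lemma exists_functional (hconn : C.Connected) (hgenus : C.V = C.EB) {r : ℕ}
    {c : ZMod r → Fin C.V} {ce : ZMod r → Fin C.EB} (hc : C.IsCircuit r c ce) :
    ∃ (nxt : Fin C.V → Fin C.V) (rk : Fin C.V → ℕ) (kk : Fin C.V → ZMod r)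
      (Φ : Fin C.V ≃ Fin C.EB),
      (∀ w, Joins C (Φ w) w (nxt w)) ∧ (∀ w, rk w ≠ 0 → rk (nxt w) + 1 = rk w) ∧
      (∀ k, rk (c k) = 0) ∧ (∀ w, rk w = 0 → c (kk w) = w) ∧ (∀ k, kk (c k) = k) ∧
      ∀ k, nxt (c k) = c (k + 1) := by
  obtain ⟨-, hci, hcei, hce⟩ := hc
  obtain ⟨rk, par, pe, hrk, hpar⟩ := exists_rank C (ce 0) hconn (Set.mem_range_self (f := c) 0)
  have hroot : ∀ k, rk (c k) = 0 := fun k => (hrk _).2 ⟨k, rfl⟩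
  have hk : ∀ w, ∃ k, rk w = 0 → c k = w := by
    intro w
    by_cases h : rk w = 0
    · obtain ⟨k, hk⟩ := (hrk w).1 h
      exact ⟨k, fun _ => hk⟩
    · exact ⟨0, fun h' => absurd h' h⟩
  choose kk hkk using hk
  have hkc : ∀ k, kk (c k) = k := fun k => hci (hkk _ (hroot k))
  set nxt : Fin C.V → Fin C.V := fun w => if rk w = 0 then c (kk w + 1) else par w with hnxt
  set Φ : Fin C.V → Fin C.EB := fun w => if rk w = 0 then ce (kk w) else pe w with hΦ
  have hJ : ∀ w, Joins C (Φ w) w (nxt w) := by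
    intro w
    by_cases h : rk w = 0
    · simp only [hnxt, hΦ, if_pos h]
      have := hce (kk w)
      rw [hkk w h] at this
      exact this
    · simp only [hnxt, hΦ, if_neg h]
      exact (hpar w h).2
  have hinj : Function.Injective Φ := by
    intro w w' hww
    have h1 := (hJ w).eq_or (hww ▸ hJ w')
    by_cases h : rk w = 0 <;> by_cases h' : rk w' = 0
    · simp only [hΦ, if_pos h, if_pos h'] at hww
      rw [← hkk w h, ← hkk w' h', hcei hww]
    · simp only [hnxt, if_pos h, if_neg h'] at h1
      rcases h1 with ⟨h1, -⟩ | ⟨-, h1⟩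
      · exact h1
      · rw [← h1] at h'
        exact absurd (hroot _) h'
    · simp only [hnxt, if_neg h, if_pos h'] at h1
      rcases h1 with ⟨h1, -⟩ | ⟨h1, -⟩
      · exact h1
      · rw [h1] at h
        exact absurd (hroot _) h
    · simp only [hnxt, if_neg h, if_neg h'] at h1
      rcases h1 with ⟨h1, -⟩ | ⟨h1, h2⟩
      · exact h1
      · have e1 := (hpar w h).1
        have e2 := (hpar w' h').1
        rw [h2] at e1
        rw [← h1] at e2
        omega
  refine ⟨nxt, rk, kk, Equiv.ofBijective Φ
    ((Fintype.bijective_iff_injective_and_card Φ).2 ⟨hinj, by simpa using hgenus⟩),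
    hJ, fun w h => ?_, hroot, hkk, hkc, fun k => ?_⟩
  · simp only [hnxt, if_neg h]
    exact (hpar w h).1
  · simp only [hnxt, if_pos (hroot k), hkc]

/-- The weak form of the zero tension condition. -/
lemma weak_tension (hval : C.Valid) (F : Fin C.V → ℚ) (i : Fin n) :
    ∑ e, (F (C.bsrc e) - F (C.bdst e)) * ((C.mB e : ℚ) * C.bdir e i)
      + ∑ ρ, F (C.rsrc ρ) * ((C.mR ρ : ℚ) * C.rdir ρ i) = 0 := by
  obtain ⟨-, -, -, -, -, ht⟩ := hval
  have h1 : ∀ u, F u * ((∑ e, (C.mB e : ℚ) * ((if C.bsrc e = u then (C.bdir e i : ℚ) else 0)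
      + (if C.bdst e = u then -(C.bdir e i : ℚ) else 0)))
      + ∑ ρ, if C.rsrc ρ = u then (C.mR ρ : ℚ) * C.rdir ρ i else 0) = 0 := by
    intro u
    have h := congrFun (ht u) i
    have h' : ((_ : ℤ) : ℚ) = ((_ : ℤ) : ℚ) := congrArg (Int.cast (R := ℚ)) h
    rw [mul_eq_zero]
    right
    rw [Pi.zero_apply, Int.cast_zero] at h'
    refine Eq.trans ?_ h'
    simp only [Pi.add_apply, Finset.sum_apply, Pi.smul_apply, smul_eq_mul]
    push_cast
    congr 1
    · refine Finset.sum_congr rfl fun e _ => ?_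
      congr 2 <;> split_ifs <;> simp
    · refine Finset.sum_congr rfl fun e _ => ?_
      split_ifs <;> simp
  have h2 := Finset.sum_eq_zero fun u (_ : u ∈ Finset.univ) => h1 u
  simp only [mul_add, Finset.mul_sum, Finset.sum_add_distrib] at h2
  rw [Finset.sum_comm, Finset.sum_comm (s := Finset.univ (α := Fin C.V)),
    Finset.sum_comm (s := Finset.univ (α := Fin C.V))] at h2
  rw [← h2, ← Finset.sum_add_distrib]
  congr 1
  · refine Finset.sum_congr rfl fun e _ => ?_
    simp
    ring
  · refine Finset.sum_congr rfl fun e _ => ?_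
    simp

/-- A zero tension curve with as many vertices as bounded edges is unicyclic. The multiplicities
are absorbed into the slopes, and contracted edges are given length one. -/
theorem exists_uni (hval : C.Valid) (hconn : C.Connected) (hgenus : C.V = C.EB) {r : ℕ}
    {c : ZMod r → Fin C.V} {ce : ZMod r → Fin C.EB} (hc : C.IsCircuit r c ce) :
    ∃ U : Uni n (Fin C.V) (Fin C.ER), U.toSkel.Img = C.ImageSet := by
  obtain ⟨nxt, rk, kk, Φ, hJ, hrk, hroot, hckk, hkkc, hnxt⟩ := exists_functional C hconn hgenus hc
  have : NeZero r := ⟨hc.1⟩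
  have hweak := weak_tension C hval
  obtain ⟨hmB, hmR, hrdir, hbdir, hpos, -⟩ := hval
  have hmB' : ∀ e, (0 : ℚ) < C.mB e := fun e => Nat.cast_pos.2 (hmB e)
  have hmR' : ∀ e, (0 : ℚ) < C.mR e := fun e => Nat.cast_pos.2 (hmR e)
  have hpos' : ∀ e i, C.pos (C.bdst e) i = C.pos (C.bsrc e) i + C.blen e * C.bdir e i := by
    intro e i
    have := congrFun (hpos e) i
    beta_reduce at this
    linarith
  have hlen : ∀ e, 0 ≤ C.blen e := fun e => by
    rcases hbdir e with h | h
    · exact h.1.le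
    · exact h.1.ge
  have hcon : ∀ e, ¬ 0 < C.blen e → C.bdir e = 0 := fun e h => by
    rcases hbdir e with h' | h'
    · exact absurd h'.1 h
    · exact h'.2
  -- the sign comparing the orientation of an edge with the direction towards the circuit
  set ε : Fin C.V → ℤ := fun w =>
    if C.bsrc (Φ w) = w ∧ C.bdst (Φ w) = nxt w then 1 else -1 with hε
  have hor : ∀ w, (ε w = 1 ∧ C.bsrc (Φ w) = w ∧ C.bdst (Φ w) = nxt w) ∨
      (ε w = -1 ∧ C.bsrc (Φ w) = nxt w ∧ C.bdst (Φ w) = w) := by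
    intro w
    by_cases h : C.bsrc (Φ w) = w ∧ C.bdst (Φ w) = nxt w
    · exact Or.inl ⟨if_pos h, h⟩
    · exact Or.inr ⟨if_neg h, (hJ w).resolve_left h⟩
  set lam : Fin C.V → ℚ := fun w =>
    if 0 < C.blen (Φ w) then C.blen (Φ w) / C.mB (Φ w) else 1 with hlam
  have hlamd : ∀ w i, lam w * (((C.mB (Φ w) : ℤ) * C.bdir (Φ w) i : ℤ) : ℚ)
      = C.blen (Φ w) * C.bdir (Φ w) i := by
    intro w i
    have := (hmB' (Φ w)).ne'
    by_cases h : 0 < C.blen (Φ w)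
    · simp only [hlam, if_pos h]
      push_cast
      field_simp
    · rw [hcon _ h]; simp
  have hpn : ∀ w i, C.pos (nxt w) i
      = C.pos w i + lam w * ((ε w * (C.mB (Φ w) * C.bdir (Φ w) i) : ℤ) : ℚ) := by
    intro w i
    rw [Int.cast_mul, mul_left_comm, hlamd]
    have := hpos' (Φ w) i
    rcases hor w with ⟨h1, h2, h3⟩ | ⟨h1, h2, h3⟩
    · rw [h2, h3] at this
      rw [h1, this]; push_cast; ring
    · rw [h2, h3] at this
      rw [h1, this]; push_cast; ring
  let U : Uni n (Fin C.V) (Fin C.ER) :=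
    { pos := C.pos
      nxt := nxt
      rk := rk
      lam := lam
      d := fun w i => ε w * (C.mB (Φ w) * C.bdir (Φ w) i)
      b := C.rsrc
      σ := fun ρ i => C.mR ρ * C.rdir ρ i
      r := r
      c := fun j => c j
      kk := fun w => (kk w).val
      rk_nxt := hrk
      lam_pos := fun w => by
        by_cases h : 0 < C.blen (Φ w)
        · simp only [hlam, if_pos h]
          exact div_pos h (hmB' _)
        · simp only [hlam, if_neg h]
          exact one_pos
      σ_ne := fun ρ h => (hrdir ρ).1 (funext fun i => by
        have := congrFun h i
        have h0 : (C.mR ρ : ℤ) ≠ 0 := by exact_mod_cast (hmR ρ).ne'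
        exact (mul_eq_zero.1 this).resolve_left h0)
      pos_nxt := hpn
      weak := fun F i => by
        rw [← hweak F i, ← Equiv.sum_comp Φ]
        congr 1
        · refine Finset.sum_congr rfl fun w _ => ?_
          rcases hor w with ⟨h1, h2, h3⟩ | ⟨h1, h2, h3⟩
          · rw [h1, h2, h3]; push_cast; ring
          · rw [h1, h2, h3]; push_cast; ring
        · refine Finset.sum_congr rfl fun ρ _ => ?_
          push_cast; ring
      r_pos := Nat.pos_of_ne_zero hc.1
      c_r := by simp
      rk_c := fun j => hroot _
      kk_c := fun j hj => by rw [hkkc, ZMod.val_cast_of_lt hj]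
      kk_lt := fun w => ZMod.val_lt _
      c_kk := fun w hw => by rw [ZMod.natCast_zmod_val, hckk w hw]
      nxt_c := fun j _ => by rw [hnxt]; push_cast; rfl }
  refine ⟨U, ?_⟩
  rw [U.img_toSkel]
  ext x
  constructor
  · rintro (⟨w, s, h0, h1, rfl⟩ | ⟨ρ, s, h0, rfl⟩)
    · replace h1 : s ≤ lam w := h1
      show (fun i => C.pos w i + s * ((ε w * (C.mB (Φ w) * C.bdir (Φ w) i) : ℤ) : ℚ)) ∈ C.ImageSet
      by_cases h : 0 < C.blen (Φ w)
      · simp only [hlam, if_pos h] at h1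
        rw [le_div_iff₀ (hmB' _)] at h1
        have h2 := mul_nonneg h0 (hmB' (Φ w)).le
        rcases hor w with ⟨e1, e2, e3⟩ | ⟨e1, e2, e3⟩
        · refine Or.inr (Or.inl ⟨Φ w, s * C.mB (Φ w), h2, h1, funext fun i => ?_⟩)
          rw [e1, e2]; push_cast; ring
        · refine Or.inr (Or.inl ⟨Φ w, C.blen (Φ w) - s * C.mB (Φ w), by linarith, by linarith,
            funext fun i => ?_⟩)
          have := hpos' (Φ w) i
          rw [e3] at this
          rw [e1, this]; push_cast; ring
      · refine Or.inl ⟨w, funext fun i => ?_⟩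
        rw [hcon _ h]; simp
    · refine Or.inr (Or.inr ⟨ρ, s * C.mR ρ, mul_nonneg h0 (hmR' ρ).le, funext fun i => ?_⟩)
      show C.pos (C.rsrc ρ) i + s * ((C.mR ρ * C.rdir ρ i : ℤ) : ℚ) = _
      push_cast; ring
  · rintro (⟨w, rfl⟩ | ⟨e, s, h0, h1, rfl⟩ | ⟨ρ, s, h0, rfl⟩)
    · exact Or.inl ⟨w, 0, le_rfl, (U.lam_pos w).le, funext fun i => by simp [U]⟩
    · obtain ⟨w, rfl⟩ := Φ.surjective e
      have hm := (hmB' (Φ w)).ne'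
      by_cases h : 0 < C.blen (Φ w)
      · have hl : U.lam w = C.blen (Φ w) / C.mB (Φ w) := if_pos h
        rcases hor w with ⟨e1, e2, e3⟩ | ⟨e1, e2, e3⟩
        · refine Or.inl ⟨w, s / C.mB (Φ w), div_nonneg h0 (hmB' _).le, ?_, funext fun i => ?_⟩
          · rw [hl]
            exact div_le_div_of_nonneg_right h1 (hmB' _).le
          · show _ = C.pos w i
              + s / C.mB (Φ w) * ((ε w * (C.mB (Φ w) * C.bdir (Φ w) i) : ℤ) : ℚ)
            rw [e1, e2]; push_cast; field_simp
        · refine Or.inl ⟨w, (C.blen (Φ w) - s) / C.mB (Φ w),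
            div_nonneg (by linarith) (hmB' _).le, ?_, funext fun i => ?_⟩
          · rw [hl]
            exact div_le_div_of_nonneg_right (by linarith) (hmB' _).le
          · show _ = C.pos w i + (C.blen (Φ w) - s) / C.mB (Φ w)
              * ((ε w * (C.mB (Φ w) * C.bdir (Φ w) i) : ℤ) : ℚ)
            have := hpos' (Φ w) i
            rw [e3] at this
            rw [e1, this]; push_cast; field_simp; ring
      · refine Or.inl ⟨C.bsrc (Φ w), 0, le_rfl, (U.lam_pos _).le, funext fun i => ?_⟩
        rw [hcon _ h]; simp [U]
    · have hm := (hmR' ρ).ne'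
      refine Or.inr ⟨ρ, s / C.mR ρ, div_nonneg h0 (hmR' ρ).le, funext fun i => ?_⟩
      show _ = C.pos (C.rsrc ρ) i + s / C.mR ρ * ((C.mR ρ * C.rdir ρ i : ℤ) : ℚ)
      push_cast; field_simp

end TropLift

/-- Let `K` be an algebraically closed field, complete with respect to a
surjective valuation `v : K^* → ℚ`, with residue characteristic zero (`v n = 0` for all
nonzero integers `n`).  Let `(ι, Γ, m)` be a *well spaced* zero tension curve in `ℚ^n` of
genus one.  Then there are `q ∈ K^*` with `v q > 0` and finite multisets `Z_i^± ⊆ K^*`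
with `|Z_i^+| = |Z_i^-|` and `∏_{z ∈ Z_i^+} z = ∏_{z ∈ Z_i^-} z`, such that, with `Θ` the
Tate theta function of `q` (characterized by the convergence of its defining products)
and `φ_i = ∏_{z ∈ Z_i^+} Θ_z / ∏_{z ∈ Z_i^-} Θ_z`: each `φ_i` is `q^ℤ`-periodic on its
domain, and the set of valuation vectors of `φ` on its domain is exactly
`ι(Γ ∖ ∂Γ) ⊆ ℚ^n`. -/
theorem genus_one_superabundant_tropical_lifting
    {K : Type*} [Field K] [IsAlgClosed K] (v : K → WithTop ℚ)
    (hv0 : ∀ x : K, v x = ⊤ ↔ x = 0)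
    (hvmul : ∀ x y : K, v (x * y) = v x + v y)
    (hvadd : ∀ x y : K, min (v x) (v y) ≤ v (x + y))
    (hvint : ∀ m : ℤ, m ≠ 0 → v ((m : K)) = 0)
    (hsurj : ∀ a : ℚ, ∃ x : K, v x = (a : WithTop ℚ))
    (hcomplete : ∀ x : ℕ → K,
      (∀ M : ℚ, ∃ N : ℕ, ∀ m₁ ≥ N, ∀ m₂ ≥ N, (M : WithTop ℚ) ≤ v (x m₁ - x m₂)) →
      ∃ L : K, VTendsto v x L)
    {n : ℕ} (C : ZTC n) (hval : C.Valid) (hconn : C.Connected)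
    (hV : 0 < C.V) (hgenus : C.V = C.EB)
    (hwellspaced : ∃ (r : ℕ) (c : ZMod r → Fin C.V) (ce : ZMod r → Fin C.EB),
      C.IsCircuit r c ce ∧ C.WellSpaced c) :
    ∃ (q : K) (Zp Zm : Fin n → Multiset K) (Θ : K → K → K),
      q ≠ 0 ∧ 0 < v q ∧
      (∀ i, ∀ z ∈ Zp i, z ≠ (0 : K)) ∧ (∀ i, ∀ z ∈ Zm i, z ≠ (0 : K)) ∧
      (∀ i, Multiset.card (Zp i) = Multiset.card (Zm i)) ∧
      (∀ i, (Zp i).prod = (Zm i).prod) ∧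
      (∀ z u : K, z ≠ 0 → u ≠ 0 → (∀ j : ℤ, u ≠ q ^ j * z) →
        Θ z u ≠ 0 ∧
        VTendsto v
          (fun m => (∏ j ∈ Finset.range m, (1 - q ^ j * u / z)) *
            ∏ j ∈ Finset.range m, (1 - q ^ (j + 1) * z / u))
          (Θ z u)) ∧
      (∀ u : K, TateDom q Zp Zm u →
        ∀ i, phiVal Θ (Zp i) (Zm i) (q * u) = phiVal Θ (Zp i) (Zm i) u) ∧
      ((fun u : K => fun i => v (phiVal Θ (Zp i) (Zm i) u)) '' {u : K | TateDom q Zp Zm u}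
        = (fun p : Fin n → ℚ => fun i => ((p i : ℚ) : WithTop ℚ)) '' C.ImageSet) := by
  obtain ⟨r, c, ce, hc, -⟩ := hwellspaced
  obtain ⟨U, hU⟩ := TropLift.exists_uni C hval hconn hgenus hc
  rw [← hU]
  exact U.toSkel.lift ⟨hv0, hvmul, hvadd, hvint, hsurj, hcomplete⟩
end

section
/- Let K be a field with a valuation v: K^* → ℚ such that v(n·1_K) = 0 for every nonzero integer n. Let R > 0 be rational, let a ≥ 1 be an integer, and let z_1^+, …, z_a^+, z_1^-, …, z_a^- ∈ K^* satisfy: v(z_i^+/z_j^+ − 1) > R and v(z_i^- /z_j^- − 1) > R for all indices i ≠ j between 1 and a, and v(z_i^+/z_j^- − 1) = R for all i, j between 1 and a. Then v(∏_{i=1}^a (z_i^+/z_i^-) − 1) = R. -/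
/-!
Write `uᵢ = zᵢ⁺ / zᵢ⁻`, fix an index `k`, and put `c = uₖ - 1`, so `v c = R`. Since
`uᵢ / uₖ = (zᵢ⁺ / zₖ⁺) (zₖ⁻ / zᵢ⁻)` is a product of two elements that are `1` up to valuation `> R`,
all the `uᵢ` agree with `1 + c` up to valuation `> R`. Products of `c` with `uᵢ - 1` have valuation
at least `2R > R`, so expanding the product to first order gives
`∏ uᵢ - 1 ≡ a c` up to valuation `> R` (`AddValuation.lt_map_prod_sub_one_sub_card_mul`).
Residue characteristic zero makes `v (a c) = v c = R`, and the ultrametric inequality finishes.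
-/

namespace AddValuation

variable {K : Type*} [Field K] (w : AddValuation K (WithTop ℚ)) {R : ℚ}

theorem map_nonneg_of_sub_one {x : K} (h : 0 ≤ w (x - 1)) : 0 ≤ w x := by
  have := w.map_le_add h (w.map_one.ge)
  simpa using this

theorem lt_map_mul_of_nonneg {x y : K} {g : WithTop ℚ} (hx : 0 ≤ w x) (hy : g < w y) :
    g < w (x * y) := by
  rw [w.map_mul]
  exact hy.trans_le (le_add_of_nonneg_left hx)

theorem map_natCast_nonneg (n : ℕ) : 0 ≤ w (n : K) := by
  induction n with
  | zero => simp
  | succ n ih =>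
    rw [Nat.cast_succ]
    exact w.map_le_add ih w.map_one.ge

/-- Elements congruent to `1` up to valuation `> R ≥ 0` are closed under multiplication. -/
theorem lt_map_mul_sub_one (hR : 0 ≤ R) {p q : K} (hp : (R : WithTop ℚ) < w (p - 1))
    (hq : (R : WithTop ℚ) < w (q - 1)) : (R : WithTop ℚ) < w (p * q - 1) := by
  have hR' : (0 : WithTop ℚ) ≤ (R : WithTop ℚ) := by exact_mod_cast hR
  have hp0 : 0 ≤ w p := w.map_nonneg_of_sub_one (hR'.trans hp.le)
  rw [show p * q - 1 = p * (q - 1) + (p - 1) by ring]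
  exact w.map_lt_add (w.lt_map_mul_of_nonneg hp0 hq) hp

/-- First-order expansion of a product: if `v c = R > 0` and every `uᵢ` is `1 + c` up to valuation
`> R`, then `∏ uᵢ` is `1 + n c` up to valuation `> R`, where `n` is the number of factors. -/
theorem lt_map_prod_sub_one_sub_card_mul {ι : Type*} (hR : 0 < R) {c : K}
    (hc : w c = (R : WithTop ℚ)) (u : ι → K) (s : Finset ι)
    (hu : ∀ i ∈ s, (R : WithTop ℚ) < w (u i - 1 - c)) :
    (R : WithTop ℚ) < w ((∏ i ∈ s, u i) - 1 - s.card * c) := by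
  classical
  have hR' : (0 : WithTop ℚ) < (R : WithTop ℚ) := by exact_mod_cast hR
  induction s using Finset.induction_on with
  | empty => simp
  | insert i s hi ih =>
    have hui := hu i (Finset.mem_insert_self i s)
    have hu1 : (R : WithTop ℚ) ≤ w (u i - 1) := by
      simpa using w.map_le_add hui.le hc.ge
    have hu0 : 0 ≤ w (u i) := w.map_nonneg_of_sub_one (hR'.le.trans hu1)
    have hcu : (R : WithTop ℚ) < w (c * (u i - 1)) := by
      rw [w.map_mul, hc]
      refine lt_of_lt_of_le ?_ (add_le_add_right hu1 _)
      exact_mod_cast lt_add_of_pos_left R hR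
    rw [Finset.prod_insert hi, Finset.card_insert_of_notMem hi,
      show u i * ∏ j ∈ s, u j - 1 - ((s.card + 1 : ℕ) : K) * c
        = u i * ((∏ j ∈ s, u j) - 1 - s.card * c) + (u i - 1 - c)
          + s.card * (c * (u i - 1)) by push_cast; ring]
    exact w.map_lt_add
      (w.map_lt_add
        (w.lt_map_mul_of_nonneg hu0 (ih fun j hj => hu j (Finset.mem_insert_of_mem hj))) hui)
      (w.lt_map_mul_of_nonneg (w.map_natCast_nonneg _) hcu)

end AddValuation


/-- Let `K` be a field with a valuation `v : K^* → ℚ` (encoded as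
`v : K → WithTop ℚ` with `v x = ⊤` iff `x = 0`) whose residue field has characteristic zero
(`v n = 0` for every nonzero integer `n`).  Let `R > 0` be rational, `a ≥ 1` an integer, and
`z₁⁺, …, z_a⁺, z₁⁻, …, z_a⁻ ∈ K^*` satisfy `v (zᵢ⁺/zⱼ⁺ − 1) > R` and `v (zᵢ⁻/zⱼ⁻ − 1) > R`
for all `i ≠ j`, and `v (zᵢ⁺/zⱼ⁻ − 1) = R` for all `i, j`.  Then
`v (∏ᵢ (zᵢ⁺/zᵢ⁻) − 1) = R`. -/
theorem valuation_prod_ratio_sub_one_eq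
    {K : Type*} [Field K] (v : K → WithTop ℚ)
    (hv0 : ∀ x : K, v x = ⊤ ↔ x = 0)
    (hvmul : ∀ x y : K, v (x * y) = v x + v y)
    (hvadd : ∀ x y : K, min (v x) (v y) ≤ v (x + y))
    (hvint : ∀ m : ℤ, m ≠ 0 → v ((m : K)) = 0)
    (R : ℚ) (hR : 0 < R) (a : ℕ) (ha : 1 ≤ a)
    (zp zm : Fin a → K)
    (hzp : ∀ i, zp i ≠ 0) (hzm : ∀ i, zm i ≠ 0)
    (hpp : ∀ i j, i ≠ j → (R : WithTop ℚ) < v (zp i / zp j - 1))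
    (hmm : ∀ i j, i ≠ j → (R : WithTop ℚ) < v (zm i / zm j - 1))
    (hpm : ∀ i j, v (zp i / zm j - 1) = (R : WithTop ℚ)) :
    v ((∏ i, zp i / zm i) - 1) = (R : WithTop ℚ) := by
  have hvone : v 1 = 0 := by simpa using hvint 1 one_ne_zero
  obtain ⟨w, hw⟩ : ∃ w : AddValuation K (WithTop ℚ), ∀ x, w x = v x :=
    ⟨AddValuation.of v ((hv0 0).2 rfl) hvone hvadd hvmul, fun _ => rfl⟩
  simp only [← hw] at hvint hpp hmm hpm ⊢
  -- On the diagonal the ratio is `1`, so the strict bounds hold for all pairs of indices.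
  have hpp' : ∀ i j, (R : WithTop ℚ) < w (zp i / zp j - 1) := fun i j => by
    by_cases h : i = j
    · subst h; simp [div_self (hzp i)]
    · exact hpp i j h
  have hmm' : ∀ i j, (R : WithTop ℚ) < w (zm i / zm j - 1) := fun i j => by
    by_cases h : i = j
    · subst h; simp [div_self (hzm i)]
    · exact hmm i j h
  let k : Fin a := ⟨0, ha⟩
  have hR' : (0 : WithTop ℚ) ≤ (R : WithTop ℚ) := by exact_mod_cast hR.le
  have hk0 : 0 ≤ w (zp k / zm k) := w.map_nonneg_of_sub_one (hR'.trans (hpm k k).ge)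
  have hu : ∀ i ∈ Finset.univ,
      (R : WithTop ℚ) < w (zp i / zm i - 1 - (zp k / zm k - 1)) := fun i _ => by
    have h := w.lt_map_mul_of_nonneg hk0 (w.lt_map_mul_sub_one hR.le (hpp' i k) (hmm' k i))
    have hpk := hzp k
    have hmk := hzm k
    have hmi := hzm i
    convert h using 2
    field_simp
    ring
  have hmain := w.lt_map_prod_sub_one_sub_card_mul hR (hpm k k) (fun i => zp i / zm i)
    Finset.univ hu
  rw [Finset.card_univ, Fintype.card_fin] at hmain
  have hac : w ((a : K) * (zp k / zm k - 1)) = (R : WithTop ℚ) := by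
    have ha' : w (a : K) = 0 := by simpa using hvint a (by omega)
    rw [w.map_mul, ha', zero_add, hpm]
  have hsum := w.map_add_eq_of_lt_left (hac.trans_lt hmain)
  rwa [add_sub_cancel, hac] at hsum
end
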